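/- arXiv:2305.06117 — 2 statements merged into one kernel-verified Lean document; each statement's English description precedes it below -/
import Mathlib

section
/- Assume p is odd and e ≥ 1. Let a ∈ V_R with a ≠ 0 and set b := f_R(a,a)/2. Define u(x) := x^p − a^{p−1}x and Δ_0(x) := −(x/a)·((b/a)x − f_R(x,a)). Then there exists a (unique) additive polynomial R_1(u) = Σ_{i=0}^{e−1} c_i u^{p^i} ∈ F̄[u] of degree p^{e−1} such that x·R(x) = u(x)·R_1(u(x)) + Δ_0(x)^p − Δ_0(x) as polynomials in F̄[x]; moreover its leading coefficient is c_{e−1} = −a_e/a^{p−1} if e > 1, and c_{e−1} = −a_e/(2a^{p−1}) if e = 1. -/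
open Finset Polynomial

/-- The additive polynomial `R(x) = ∑_{i=0}^e a_i x^{p^i}`, evaluated in any commutative ring. -/
def Rgen {A : Type*} [CommRing A] (p e : ℕ) (a : ℕ → A) (x : A) : A :=
  ∑ i ∈ Finset.range (e + 1), a i * x ^ p ^ i

/-- `E_R(x) = R(x)^{p^e} + ∑_{i=0}^e (a_i x)^{p^{e-i}}`. -/
def Egen {A : Type*} [CommRing A] (p e : ℕ) (a : ℕ → A) (x : A) : A :=
  Rgen p e a x ^ p ^ e + ∑ i ∈ Finset.range (e + 1), (a i * x) ^ p ^ (e - i)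

/-- `f_R(x,y) = -∑_{i=0}^{e-1} ( ∑_{j=0}^{e-i-1} (a_i x^{p^i} y)^{p^j} + (x R(y))^{p^i} )`. -/
def fgen {A : Type*} [CommRing A] (p e : ℕ) (a : ℕ → A) (x y : A) : A :=
  -∑ i ∈ Finset.range e,
    ((∑ j ∈ Finset.range (e - i), (a i * x ^ p ^ i * y) ^ p ^ j) + (x * Rgen p e a y) ^ p ^ i)

/-- The set `H_R = {(a,b) : E_R(a) = 0, b^p - b = a R(a)}`. -/
def Hset {K : Type*} [CommRing K] (p e : ℕ) (a : ℕ → K) : Set (K × K) :=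
  {h | Egen p e a h.1 = 0 ∧ h.2 ^ p - h.2 = h.1 * Rgen p e a h.1}

/-- The group law `(a,b)·(a',b') = (a+a', b+b'+f_R(a,a'))` on `H_R`. -/
def Hmul {K : Type*} [CommRing K] (p e : ℕ) (a : ℕ → K) (h h' : K × K) : K × K :=
  (h.1 + h'.1, h.2 + h'.2 + fgen p e a h.1 h'.1)

lemma fgen_key {A : Type*} [CommRing A] (p e : ℕ) (φ : A →+* A) (hφ : ∀ x, φ x = x ^ p)
    (a : ℕ → A) (x y : A) :
    fgen p e a x y ^ p - fgen p e a x y =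
      -(x ^ p ^ e * Egen p e a y) + y * Rgen p e a x + x * Rgen p e a y := by
  have tel : ∀ (z : A) (m : ℕ),
      φ (∑ j ∈ range m, z ^ p ^ j) - ∑ j ∈ range m, z ^ p ^ j = z ^ p ^ m - z := by
    intro z m
    rw [map_sum, ← Finset.sum_sub_distrib]
    have : ∀ j ∈ range m, φ (z ^ p ^ j) - z ^ p ^ j = z ^ p ^ (j + 1) - z ^ p ^ j := by
      intro j _
      rw [hφ, ← pow_mul, ← pow_succ]
    rw [Finset.sum_congr rfl this, Finset.sum_range_sub (fun j => z ^ p ^ j)]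
    simp
  have h1 : fgen p e a x y = -(∑ i ∈ range e, ∑ j ∈ range (e - i), (a i * x ^ p ^ i * y) ^ p ^ j)
      - ∑ i ∈ range e, (x * Rgen p e a y) ^ p ^ i := by
    unfold fgen
    rw [Finset.sum_add_distrib]; ring
  have h2 : φ (∑ i ∈ range e, ∑ j ∈ range (e - i), (a i * x ^ p ^ i * y) ^ p ^ j)
      - ∑ i ∈ range e, ∑ j ∈ range (e - i), (a i * x ^ p ^ i * y) ^ p ^ j
      = ∑ i ∈ range e, (x ^ p ^ e * (a i * y) ^ p ^ (e - i)) - y * ∑ i ∈ range e, a i * x ^ p ^ i := by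
    rw [map_sum, ← Finset.sum_sub_distrib, Finset.mul_sum, ← Finset.sum_sub_distrib]
    refine Finset.sum_congr rfl fun i hi => ?_
    rw [tel]
    have : p ^ e = p ^ i * p ^ (e - i) := by
      rw [← pow_add]; congr 1; have := Finset.mem_range.1 hi; omega
    rw [this, pow_mul, mul_pow, mul_pow, mul_pow]; ring
  have h3 := tel (x * Rgen p e a y) e
  rw [← hφ, h1, map_sub, map_neg]
  have h4 : Egen p e a y = Rgen p e a y ^ p ^ e + ∑ i ∈ range e, (a i * y) ^ p ^ (e - i) + a e * y := by
    unfold Egen; rw [Finset.sum_range_succ]; simp; ring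
  have h5 : Rgen p e a x = ∑ i ∈ range e, a i * x ^ p ^ i + a e * x ^ p ^ e := by
    unfold Rgen; rw [Finset.sum_range_succ]
  rw [← Finset.mul_sum] at h2
  rw [h4, h5]
  rw [mul_pow] at h3
  linear_combination -h2 - h3

/-- span of `u^{p^j}`, `j < m`. -/
noncomputable def Sspan {K : Type*} [Field K] (p : ℕ) (u : Polynomial K) (m : ℕ) : Submodule K (Polynomial K) :=
  Submodule.span K {P | ∃ j, j < m ∧ P = u ^ p ^ j}

/-- `P ↦ P - (P(α)/α) X`. -/
noncomputable def Lmap {K : Type*} [Field K] (α : K) : Polynomial K →ₗ[K] Polynomial K where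
  toFun P := P - C (P.eval α / α) * X
  map_add' P Q := by simp [add_div]; ring
  map_smul' c P := by simp [mul_div_assoc, smul_eq_C_mul]; ring

lemma Sspan_mono {K : Type*} [Field K] (p : ℕ) (u : Polynomial K) {m m' : ℕ} (h : m ≤ m') :
    Sspan p u m ≤ Sspan p u m' := by
  apply Submodule.span_mono
  rintro P ⟨j, hj, rfl⟩
  exact ⟨j, by omega, rfl⟩

lemma Sspan_frob {K : Type*} [Field K] (p : ℕ) (φ : Polynomial K →+* Polynomial K)
    (hφ : ∀ x, φ x = x ^ p) (u : Polynomial K) (m : ℕ) (P : Polynomial K) (hP : P ∈ Sspan p u m) :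
    P ^ p ∈ Sspan p u (m + 1) := by
  induction hP using Submodule.span_induction with
  | mem x h =>
    obtain ⟨j, hj, rfl⟩ := h
    exact Submodule.subset_span ⟨j + 1, by omega, by rw [← pow_mul, ← pow_succ]⟩
  | zero => rw [← hφ, map_zero]; exact zero_mem _
  | add x y _ _ hx hy => rw [← hφ, map_add, hφ, hφ]; exact add_mem hx hy
  | smul c x _ hx => rw [_root_.smul_pow]; exact Submodule.smul_mem _ _ hx

/-- `X^{p^{i+1}} - α^{p^{i+1}-1} X = u^{p^i} + lower`. -/
lemma Lmap_top {K : Type*} [Field K] (p : ℕ) (hp : 0 < p) (φ : Polynomial K →+* Polynomial K)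
    (hφ : ∀ x, φ x = x ^ p) (α : K) (hα : α ≠ 0) (u : Polynomial K)
    (hu : u = X ^ p - C (α ^ (p - 1)) * X) (i : ℕ) :
    Lmap α (X ^ p ^ (i + 1)) - u ^ p ^ i ∈ Sspan p u i := by
  have hA : α ^ (p - 1) = α ^ p / α := by
    rw [eq_div_iff hα, ← pow_succ]; congr 1; omega
  induction i with
  | zero =>
    have : Lmap α (X ^ p ^ (0 + 1)) - u ^ p ^ 0 = 0 := by
      simp [Lmap, hu, hA]
    rw [this]; exact zero_mem _
  | succ i ih =>
    have h1 := Sspan_frob p φ hφ u i _ ih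
    have h2 : Lmap α (X ^ p ^ (i + 1 + 1)) - u ^ p ^ (i + 1)
        = (Lmap α (X ^ p ^ (i + 1)) - u ^ p ^ i) ^ p + (α ^ p ^ (i + 1) / α) ^ p • u ^ p ^ 0 := by
      rw [← hφ, map_sub, hφ (u ^ p ^ i), ← pow_mul, ← pow_succ]
      simp only [Lmap, LinearMap.coe_mk, AddHom.coe_mk, map_sub, map_mul]
      rw [hφ, hφ, hφ, ← pow_mul, ← pow_succ]
      simp only [eval_pow, eval_X, pow_zero, pow_one, smul_eq_C_mul]
      rw [hu, hA]
      have : C (α ^ p ^ (i + 1 + 1) / α) = C ((α ^ p ^ (i + 1) / α) ^ p) * C (α ^ p / α) := by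
        rw [← C_mul]; congr 1
        rw [pow_succ p (i+1), pow_mul, div_pow]; field_simp
      rw [this, C_pow]; ring
    rw [h2]
    refine add_mem h1 (Submodule.smul_mem _ _ (Submodule.subset_span ⟨0, by omega, rfl⟩))

lemma Lmap_mem {K : Type*} [Field K] (p : ℕ) (hp : 0 < p) (φ : Polynomial K →+* Polynomial K)
    (hφ : ∀ x, φ x = x ^ p) (α : K) (hα : α ≠ 0) (u : Polynomial K)
    (hu : u = X ^ p - C (α ^ (p - 1)) * X) (i m : ℕ) (him : i ≤ m) (c : K) :
    Lmap α (C c * X ^ p ^ i) ∈ Sspan p u m := by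
  rw [← smul_eq_C_mul, map_smul]
  refine Submodule.smul_mem _ _ ?_
  cases i with
  | zero =>
    have : Lmap α (X ^ p ^ 0) = 0 := by simp [Lmap, hα]
    rw [this]; exact zero_mem _
  | succ i =>
    have h := Sspan_mono p u (show i ≤ m by omega) (Lmap_top p hp φ hφ α hα u hu i)
    have h2 : u ^ p ^ i ∈ Sspan p u m := Submodule.subset_span ⟨i, by omega, rfl⟩
    simpa using add_mem h h2

lemma coeff_u {K : Type*} [Field K] (p : ℕ) (hp : 1 < p) (φ : Polynomial K →+* Polynomial K)
    (hφ : ∀ x, φ x = x ^ p) (A : K) (u : Polynomial K)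
    (hu : u = X ^ p - C A * X) (j k : ℕ) (hjk : j ≤ k) :
    (u ^ p ^ j).coeff (p ^ (k + 1)) = if j = k then 1 else 0 := by
  have h : ∀ j, u ^ p ^ j = X ^ p ^ (j + 1) - C (A ^ p ^ j) * X ^ p ^ j := by
    intro j
    induction j with
    | zero => simp [hu]
    | succ j ih =>
      rw [pow_succ p j, pow_mul, ih, ← hφ, map_sub, map_mul, hφ, hφ, hφ, ← C_pow, ← pow_mul,
        ← pow_mul, ← pow_mul, ← pow_succ, ← pow_succ]
  rw [h, coeff_sub, coeff_C_mul, coeff_X_pow, coeff_X_pow]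
  have e1 : p ^ (k + 1) = p ^ (j + 1) ↔ j = k := by
    rw [Nat.pow_right_injective hp |>.eq_iff]; omega
  have e2 : p ^ (k + 1) ≠ p ^ j := by
    intro h; have := Nat.pow_right_injective hp h; omega
  simp [e1, e2]

lemma coeff_Sspan {K : Type*} [Field K] (p : ℕ) (hp : 1 < p) (φ : Polynomial K →+* Polynomial K)
    (hφ : ∀ x, φ x = x ^ p) (A : K) (u : Polynomial K)
    (hu : u = X ^ p - C A * X) (k : ℕ) (P : Polynomial K) (hP : P ∈ Sspan p u k) :
    P.coeff (p ^ (k + 1)) = 0 := by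
  induction hP using Submodule.span_induction with
  | mem x h =>
    obtain ⟨j, hj, rfl⟩ := h
    rw [coeff_u p hp φ hφ A u hu j k hj.le, if_neg (by omega)]
  | zero => simp
  | add x y _ _ hx hy => simp [hx, hy]
  | smul c x _ hx => simp [hx]

lemma Sspan_exists {K : Type*} [Field K] (p : ℕ) (u : Polynomial K) (m : ℕ) (P : Polynomial K)
    (hP : P ∈ Sspan p u m) : ∃ c : Fin m → K, P = ∑ i : Fin m, C (c i) * u ^ p ^ (i : ℕ) := by
  have : {P | ∃ j, j < m ∧ P = u ^ p ^ j} = Set.range (fun i : Fin m => u ^ p ^ (i : ℕ)) := by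
    ext P; constructor
    · rintro ⟨j, hj, rfl⟩; exact ⟨⟨j, hj⟩, rfl⟩
    · rintro ⟨j, rfl⟩; exact ⟨j, j.2, rfl⟩
  rw [Sspan, this, Submodule.mem_span_range_iff_exists_fun] at hP
  obtain ⟨c, hc⟩ := hP
  exact ⟨c, by simp only [← hc, smul_eq_C_mul]⟩

lemma u_indep {K : Type*} [Field K] (p : ℕ) (hp : 1 < p) (u : Polynomial K)
    (hu : 0 < u.natDegree) (m : ℕ) (c d : Fin m → K)
    (h : ∑ i : Fin m, C (c i) * u ^ p ^ (i : ℕ) = ∑ i : Fin m, C (d i) * u ^ p ^ (i : ℕ)) :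
    c = d := by
  have h0 : (∑ i : Fin m, C (c i - d i) * (X : Polynomial K) ^ p ^ (i : ℕ)).comp u = 0 := by
    rw [Polynomial.sum_comp]
    simp only [mul_comp, C_comp, Polynomial.pow_comp, X_comp, sub_comp, C_sub, sub_mul, Finset.sum_sub_distrib]
    rw [h, sub_self]
  rw [Polynomial.comp_eq_zero_iff] at h0
  rcases h0 with h0 | ⟨_, h0⟩
  · ext i
    have := congrArg (fun P => coeff P (p ^ (i : ℕ))) h0
    simp only [finsetSum_coeff, coeff_C_mul, coeff_X_pow, coeff_zero] at this
    rw [Finset.sum_eq_single i] at this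
    · simpa [sub_eq_zero] using this
    · intro b _ hb
      rw [if_neg, mul_zero]
      intro h
      exact hb (Fin.ext (Nat.pow_right_injective hp h).symm)
    · simp
  · rw [h0, natDegree_C] at hu; omega

/-- (quotient step) for `p` odd, `e ≥ 1`, `a ∈ V_R ∖ {0}`, `b := f_R(a,a)/2`,
`u(x) := x^p − a^{p−1}x`, `Δ₀(x) := −(x/a)((b/a)x − f_R(x,a))`, there is a unique additive
polynomial `R₁` of degree `p^{e−1}` with `x·R(x) = u(x)·R₁(u(x)) + Δ₀(x)^p − Δ₀(x)`, and its
leading coefficient is `−a_e/a^{p−1}` if `e > 1` and `−a_e/(2a^{p−1})` if `e = 1`. -/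
theorem statement7 {F K : Type*} [Field F] [Fintype F] [Field K] [IsAlgClosed K] [Algebra F K]
    (p₀ n p s q e : ℕ) (hp₀ : p₀.Prime) (hodd : Odd p₀) [CharP F p₀]
    (hn : 0 < n) (hpn : p = p₀ ^ n) (hs : 0 < s) (hq : q = p ^ s)
    (hcard : Fintype.card F = q) (a : ℕ → F) (hae : a e ≠ 0) (he : 1 ≤ e)
    (α : K) (hαV : Egen p e (fun i => algebraMap F K (a i)) α = 0) (hα0 : α ≠ 0) :
    let aK : ℕ → K := fun i => algebraMap F K (a i)
    let aP : ℕ → Polynomial K := fun i => Polynomial.C (aK i)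
    let β : K := fgen p e aK α α / 2
    let u : Polynomial K := Polynomial.X ^ p - Polynomial.C (α ^ (p - 1)) * Polynomial.X
    let Δ₀ : Polynomial K := -(Polynomial.C α⁻¹ * Polynomial.X) *
      (Polynomial.C (β / α) * Polynomial.X - fgen p e aP Polynomial.X (Polynomial.C α))
    (∃! c : Fin e → K,
      Polynomial.X * Rgen p e aP Polynomial.X =
        u * (∑ i : Fin e, Polynomial.C (c i) * u ^ p ^ (i : ℕ)) + Δ₀ ^ p - Δ₀) ∧
    (∀ c : Fin e → K,
      Polynomial.X * Rgen p e aP Polynomial.X =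
        u * (∑ i : Fin e, Polynomial.C (c i) * u ^ p ^ (i : ℕ)) + Δ₀ ^ p - Δ₀ →
      c ⟨e - 1, by omega⟩ =
        if 1 < e then -aK e / α ^ (p - 1) else -aK e / (2 * α ^ (p - 1))) := by

  intro aK aP β u Δ₀
  have : Fact p₀.Prime := ⟨hp₀⟩
  have : CharP K p₀ := charP_of_injective_algebraMap (algebraMap F K).injective p₀
  have hp : 1 < p := by rw [hpn]; exact Nat.one_lt_pow hn.ne' hp₀.one_lt
  have h2 : (2 : K) ≠ 0 := by
    intro h
    have h' : ((2 : ℕ) : K) = 0 := by exact_mod_cast h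
    rw [CharP.cast_eq_zero_iff K p₀] at h'
    have := (Nat.prime_dvd_prime_iff_eq hp₀ Nat.prime_two).1 h'
    subst this
    exact absurd hodd (by decide)
  obtain ⟨φ, hφ⟩ : ∃ φ : Polynomial K →+* Polynomial K, ∀ x, φ x = x ^ p :=
    ⟨iterateFrobenius _ p₀ n, fun x => by rw [iterateFrobenius_def, hpn]⟩
  obtain ⟨ψ, hψ⟩ : ∃ φ : K →+* K, ∀ x, φ x = x ^ p :=
    ⟨iterateFrobenius _ p₀ n, fun x => by rw [iterateFrobenius_def, hpn]⟩
  have hu : u = X ^ p - C (α ^ (p - 1)) * X := rfl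
  have hE : Egen p e aK α = 0 := hαV
  have hEP : Egen p e aP (C α) = 0 := by
    have : Egen p e aP (C α) = C (Egen p e aK α) := by
      simp [Egen, Rgen, aP]
    rw [this, hE, C_0]
  have hRα : Rgen p e aP (C α) = C (Rgen p e aK α) := by simp [Rgen, aP]
  set ρ := Rgen p e aK α with hρ
  set g := fgen p e aP X (C α) with hg
  set R := Rgen p e aP (X : Polynomial K) with hR
  have hgp : g ^ p = g + C α * R + X * C ρ := by
    have := fgen_key p e φ hφ aP X (C α)
    rw [hEP, hRα] at this
    linear_combination this
  have hgα : g.eval α = 2 * β := by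
    have : g.eval α = fgen p e aK α α := by
      simp only [hg, fgen, Rgen, aP, eval_finsetSum, eval_neg, eval_add, eval_mul, eval_pow, eval_X, eval_C]
    rw [this]; simp only [β]; field_simp
  have hRe : R.eval α = ρ := by
    simp [hR, hρ, Rgen, aP, eval_finsetSum]
  have hββ : β ^ p = β + α * ρ := by
    have h := fgen_key p e ψ hψ aK α α
    rw [hE] at h
    have e1 : fgen p e aK α α = 2 * β := by simp only [β]; field_simp
    rw [e1, ← hψ, map_mul, map_ofNat, hψ] at h
    have : 2 * (β ^ p - (β + α * ρ)) = 0 := by linear_combination h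
    have := (mul_eq_zero.1 this).resolve_left h2
    linear_combination this
  -- membership
  have hLg : Lmap α g ∈ Sspan p u (e - 1) := by
    rw [hg, fgen, map_neg, map_sum]
    refine neg_mem (sum_mem fun i hi => ?_)
    have hi' := Finset.mem_range.1 hi
    rw [map_add, map_sum, hRα]
    refine add_mem (sum_mem fun j hj => ?_) ?_
    · have hj' := Finset.mem_range.1 hj
      have : (aP i * X ^ p ^ i * C α) ^ p ^ j = C ((aK i * α) ^ p ^ j) * X ^ p ^ (i + j) := by
        simp only [aP, C_pow, C_mul, pow_add p i j, pow_mul]; ring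
      rw [this]
      exact Lmap_mem p (by omega) φ hφ α hα0 u hu _ _ (by omega) _
    · have : (X * C ρ) ^ p ^ i = C (ρ ^ p ^ i) * X ^ p ^ i := by
        rw [mul_pow, C_pow]; ring
      rw [this]
      exact Lmap_mem p (by omega) φ hφ α hα0 u hu _ _ (by omega) _
  obtain ⟨k, rfl⟩ : ∃ k, e = k + 1 := ⟨e - 1, by omega⟩
  simp only [Nat.add_sub_cancel] at hLg ⊢
  have hLR : Lmap α R - C (aK (k + 1)) * u ^ p ^ k ∈ Sspan p u k := by
    rw [hR, Rgen, Finset.sum_range_succ, map_add, map_sum, add_sub_assoc]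
    refine add_mem (sum_mem fun i hi => ?_) ?_
    · exact Lmap_mem p (by omega) φ hφ α hα0 u hu _ _
        (by have := Finset.mem_range.1 hi; omega) _
    · simp only [aP]
      rw [← smul_eq_C_mul, ← smul_eq_C_mul, map_smul, ← smul_sub]
      exact Submodule.smul_mem _ _ (Lmap_top p (by omega) φ hφ α hα0 u hu k)
  -- the polynomial R₁
  set R₁ : Polynomial K := C (β ^ p / α ^ (2 * p)) * u ^ p ^ 0
      - C ((α ^ p)⁻¹) * (Lmap α g + C α * Lmap α R) with hR₁
  have hmain : X * R = u * R₁ + Δ₀ ^ p - Δ₀ := by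
    have hΔ : Δ₀ = -(C α⁻¹ * X) * (C (β / α) * X - g) := rfl
    have e1 : Lmap α g = g - 2 * C β * C α⁻¹ * X := by
      simp only [Lmap, LinearMap.coe_mk, AddHom.coe_mk, hgα, div_eq_mul_inv, C_mul]
      rw [show (C (2 : K)) = 2 from rfl]
    have e2 : Lmap α R = R - C ρ * C α⁻¹ * X := by
      simp only [Lmap, LinearMap.coe_mk, AddHom.coe_mk, hRe, div_eq_mul_inv, C_mul]
    have hXp : X ^ p = u + C (α ^ (p - 1)) * X := by rw [hu]; ring
    have hW : C ((α ^ p)⁻¹) * C (α ^ (p - 1)) = C α⁻¹ := by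
      rw [← C_mul]; congr 1
      have : α ^ p = α ^ (p - 1) * α := by rw [← pow_succ]; congr 1; omega
      rw [this]; field_simp
    have hV : C α⁻¹ * C α = 1 := by rw [← C_mul, inv_mul_cancel₀ hα0, C_1]
    have hΔp : Δ₀ ^ p = -(C ((α ^ p)⁻¹) * X ^ p) *
        ((C β + C α * C ρ) * C ((α ^ p)⁻¹) * X ^ p - (g + C α * R + X * C ρ)) := by
      rw [← hgp, ← C_mul, ← C_add, ← hββ, hΔ, ← hφ]
      simp only [map_neg, map_mul, map_sub]
      simp only [hφ, ← C_pow, inv_pow, div_pow]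
      rw [div_eq_mul_inv, C_mul]
    have e3 : C (β ^ p / α ^ (2 * p)) = (C β + C α * C ρ) * C ((α ^ p)⁻¹) * C ((α ^ p)⁻¹) := by
      rw [← C_mul, ← C_add, ← hββ, ← C_mul, ← C_mul]; congr 1
      rw [two_mul, pow_add]; field_simp
    have hWX : C ((α ^ p)⁻¹) * X ^ p = C ((α ^ p)⁻¹) * u + C α⁻¹ * X := by
      rw [hXp, ← hW]; ring
    have hΔp' : Δ₀ ^ p = -(C ((α ^ p)⁻¹) * u + C α⁻¹ * X) *
        ((C β + C α * C ρ) * (C ((α ^ p)⁻¹) * u + C α⁻¹ * X) - (g + C α * R + X * C ρ)) := by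
      rw [hΔp, ← hWX]; ring
    rw [hΔp', hR₁, e1, e2, e3, hΔ, div_eq_mul_inv, C_mul, pow_zero, pow_one]
    generalize C ((α ^ p)⁻¹) = W at *
    generalize C α⁻¹ = V at *
    generalize C α = Y at *
    clear_value u g R ρ
    clear * - hV
    grind
  have hmem : R₁ - C (β ^ p / α ^ (2 * p)) * u ^ p ^ 0 +
      C (aK (k + 1) / α ^ (p - 1)) * u ^ p ^ k ∈ Sspan p u k := by
    have : R₁ - C (β ^ p / α ^ (2 * p)) * u ^ p ^ 0 +
      C (aK (k + 1) / α ^ (p - 1)) * u ^ p ^ k =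
      (-(α ^ p)⁻¹) • (Lmap α g + α • (Lmap α R - C (aK (k + 1)) * u ^ p ^ k)) := by
      have : aK (k + 1) / α ^ (p - 1) = (α ^ p)⁻¹ * α * aK (k + 1) := by
        have : α ^ p = α ^ (p - 1) * α := by rw [← pow_succ]; congr 1; omega
        rw [this]; field_simp
      rw [hR₁, this]
      simp only [smul_eq_C_mul, C_mul, C_neg]; ring
    rw [this]
    exact Submodule.smul_mem _ _ (add_mem hLg (Submodule.smul_mem _ _ hLR))
  have hR₁mem : R₁ ∈ Sspan p u (k + 1) := by
    have h1 := Sspan_mono p u (Nat.le_succ k) hmem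
    have h2 : C (β ^ p / α ^ (2 * p)) * u ^ p ^ 0 ∈ Sspan p u (k + 1) := by
      rw [← smul_eq_C_mul]
      exact Submodule.smul_mem _ _ (Submodule.subset_span ⟨0, by omega, rfl⟩)
    have h3 : C (aK (k + 1) / α ^ (p - 1)) * u ^ p ^ k ∈ Sspan p u (k + 1) := by
      rw [← smul_eq_C_mul]
      exact Submodule.smul_mem _ _ (Submodule.subset_span ⟨k, by omega, rfl⟩)
    have := sub_mem (add_mem h1 h2) h3
    convert this using 1
    ring
  have hudeg : 0 < u.natDegree := by
    have h := coeff_u p hp φ hφ _ u hu 0 0 le_rfl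
    simp only [pow_zero, pow_one, zero_add, if_true] at h
    have := le_natDegree_of_ne_zero (p := u) (n := p) (by rw [h]; exact one_ne_zero)
    omega
  have hu0 : u ≠ 0 := by rintro h; rw [h] at hudeg; simp at hudeg
  have huniq : ∀ c : Fin (k + 1) → K,
      X * R = u * (∑ i : Fin (k + 1), C (c i) * u ^ p ^ (i : ℕ)) + Δ₀ ^ p - Δ₀ →
      ∑ i : Fin (k + 1), C (c i) * u ^ p ^ (i : ℕ) = R₁ := by
    intro c hc
    apply mul_left_cancel₀ hu0
    linear_combination hmain - hc
  obtain ⟨c₀, hc₀⟩ := Sspan_exists p u (k + 1) R₁ hR₁mem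
  refine ⟨⟨c₀, ?_, ?_⟩, ?_⟩
  · show X * R = _
    rw [← hc₀]; exact hmain
  · intro c hc
    exact u_indep p hp u hudeg _ _ _ ((huniq c hc).trans hc₀)
  · intro c hc
    have h := huniq c hc
    have hco := coeff_Sspan p hp φ hφ _ u hu k _ hmem
    rw [← h] at hco
    have hs : (∑ i : Fin (k + 1), C (c i) * u ^ p ^ (i : ℕ)).coeff (p ^ (k + 1))
        = c ⟨k, by omega⟩ := by
      rw [finsetSum_coeff, Finset.sum_eq_single ⟨k, by omega⟩]
      · rw [coeff_C_mul, coeff_u p hp φ hφ _ u hu k k le_rfl]; simp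
      · intro b _ hb
        rw [coeff_C_mul, coeff_u p hp φ hφ _ u hu b k (by omega), if_neg, mul_zero]
        intro h; exact hb (Fin.ext h)
      · simp
    rw [coeff_add, coeff_sub, hs, coeff_C_mul, coeff_C_mul,
      coeff_u p hp φ hφ _ u hu 0 k (by omega), coeff_u p hp φ hφ _ u hu k k le_rfl] at hco
    rcases Nat.eq_zero_or_pos k with rfl | hk
    · simp only [if_true, mul_one] at hco
      rw [if_neg (by omega)]
      have hβ2 : 2 * β ^ p = aK 1 * α * α ^ p := by
        have e1 : 2 * β = -(2 * aK 0 * α ^ 2 + aK 1 * α ^ p * α) := by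
          simp only [β]
          simp [fgen, Rgen, Finset.sum_range_succ]
          field_simp; ring
        have e2 := congrArg ψ e1
        have e3 := hE
        simp only [Egen, Rgen, Finset.sum_range_succ, Finset.range_zero, Finset.sum_empty,
          zero_add, pow_zero, pow_one, Nat.sub_zero, Nat.sub_self] at e3
        rw [← hψ (_ + _)] at e3
        simp only [map_mul, map_neg, map_add, map_ofNat, map_pow] at e2 e3
        simp only [hψ, mul_pow] at e2 e3
        linear_combination e2 - α ^ p * e3
      have hA : α ^ p = α ^ (p - 1) * α := by rw [← pow_succ]; congr 1; omega
      have hB : β ^ p / α ^ (2 * p) = aK 1 / (2 * α ^ (p - 1)) := by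
        have : β ^ p = aK 1 * α * α ^ p / 2 := by rw [← hβ2]; field_simp
        rw [this, two_mul, pow_add, hA]; field_simp
      rw [hB] at hco
      have : c ⟨0, by omega⟩ = aK 1 / (2 * α ^ (p - 1)) - aK 1 / α ^ (p - 1) := by
        simp only [zero_add] at hco
        linear_combination hco
      simp only [zero_add]
      refine this.trans ?_
      field_simp; ring
    · rw [if_neg (by omega)] at hco
      simp only [if_true, mul_one, mul_zero] at hco
      rw [if_pos (by omega)]
      rw [neg_div]
      linear_combination hco
end

section
/- Assume (p_0, e) ≠ (2, 0) and that there exists a maximal abelian subgroup A_R of H_R contained in F_q × F_q. Then #{(x,y) ∈ F_{q^{4p_0}} × F_{q^{4p_0}} : y^p − y = x·R(x)} = q^{4p_0} − (p−1)·p^e·q^{2p_0}. (Equivalently, the smooth compactification of the affine curve y^p − y = xR(x), which has genus p^e(p−1)/2 and a single point at infinity, is F_{q^{4p_0}}-minimal; in particular it is supersingular.) -/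
open Finset Polynomial

/-- `x ↦ x ^ p ^ i` is a ring homomorphism for all `i`. -/
def FrobP (p : ℕ) (A : Type*) [CommRing A] : Prop :=
  ∀ i : ℕ, ∃ φ : A →+* A, ∀ x, φ x = x ^ p ^ i

lemma frobP_of_charP {A : Type*} [CommRing A] {p₀ n p : ℕ} (hp₀ : p₀.Prime) [CharP A p₀]
    (hpn : p = p₀ ^ n) : FrobP p A := by
  intro i
  have : Fact p₀.Prime := ⟨hp₀⟩
  refine ⟨iterateFrobenius A p₀ (n * i), fun x => ?_⟩
  rw [iterateFrobenius_def, hpn, ← pow_mul]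

section basic
variable {A : Type*} [CommRing A] {p e : ℕ} {a : ℕ → A}

lemma FrobP.add (h : FrobP p A) (i : ℕ) (x y : A) : (x + y) ^ p ^ i = x ^ p ^ i + y ^ p ^ i := by
  obtain ⟨φ, hφ⟩ := h i
  simp only [← hφ, map_add]

lemma FrobP.sub (h : FrobP p A) (i : ℕ) (x y : A) : (x - y) ^ p ^ i = x ^ p ^ i - y ^ p ^ i := by
  obtain ⟨φ, hφ⟩ := h i
  simp only [← hφ, map_sub]

lemma FrobP.neg (h : FrobP p A) (i : ℕ) (x : A) : (-x) ^ p ^ i = - x ^ p ^ i := by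
  obtain ⟨φ, hφ⟩ := h i
  simp only [← hφ, map_neg]

lemma FrobP.zero (h : FrobP p A) (i : ℕ) : (0 : A) ^ p ^ i = 0 := by
  obtain ⟨φ, hφ⟩ := h i
  simp only [← hφ, map_zero]

lemma FrobP.sum (h : FrobP p A) (i : ℕ) {ι : Type*} (s : Finset ι) (g : ι → A) :
    (∑ k ∈ s, g k) ^ p ^ i = ∑ k ∈ s, g k ^ p ^ i := by
  obtain ⟨φ, hφ⟩ := h i
  simp only [← hφ, map_sum]

lemma FrobP.add1 (h : FrobP p A) (x y : A) : (x + y) ^ p = x ^ p + y ^ p := by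
  simpa using h.add 1 x y
lemma FrobP.sub1 (h : FrobP p A) (x y : A) : (x - y) ^ p = x ^ p - y ^ p := by
  simpa using h.sub 1 x y
lemma FrobP.neg1 (h : FrobP p A) (x : A) : (-x) ^ p = - x ^ p := by
  simpa using h.neg 1 x
lemma FrobP.sum1 (h : FrobP p A) {ι : Type*} (s : Finset ι) (g : ι → A) :
    (∑ k ∈ s, g k) ^ p = ∑ k ∈ s, g k ^ p := by
  simpa using h.sum 1 s g

lemma fixed_pow {c : A} (hc : c ^ p = c) (i : ℕ) : c ^ p ^ i = c := by
  induction i with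
  | zero => simp
  | succ k ih => rw [pow_succ, pow_mul, ih, hc]

lemma R_map {B : Type*} [CommRing B] (φ : A →+* B) (x : A) :
    φ (Rgen p e a x) = Rgen p e (fun i => φ (a i)) (φ x) := by
  simp [Rgen]

lemma E_map {B : Type*} [CommRing B] (φ : A →+* B) (x : A) :
    φ (Egen p e a x) = Egen p e (fun i => φ (a i)) (φ x) := by
  simp [Egen, R_map]

lemma f_map {B : Type*} [CommRing B] (φ : A →+* B) (x y : A) :
    φ (fgen p e a x y) = fgen p e (fun i => φ (a i)) (φ x) (φ y) := by
  simp [fgen, R_map]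

lemma R_add (h : FrobP p A) (x y : A) :
    Rgen p e a (x + y) = Rgen p e a x + Rgen p e a y := by
  simp [Rgen, h.add, mul_add, Finset.sum_add_distrib]

lemma E_add (h : FrobP p A) (x y : A) :
    Egen p e a (x + y) = Egen p e a x + Egen p e a y := by
  simp only [Egen, R_add h, mul_add, h.add, Finset.sum_add_distrib]
  ring

lemma f_add_left (h : FrobP p A) (x x' y : A) :
    fgen p e a (x + x') y = fgen p e a x y + fgen p e a x' y := by
  simp only [fgen, mul_add, add_mul, h.add, Finset.sum_add_distrib]
  ring

lemma f_add_right (h : FrobP p A) (x y y' : A) :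
    fgen p e a x (y + y') = fgen p e a x y + fgen p e a x y' := by
  simp only [fgen, R_add h, mul_add, h.add, Finset.sum_add_distrib]
  ring

lemma R_smul {c : A} (hc : c ^ p = c) (x : A) :
    Rgen p e a (c * x) = c * Rgen p e a x := by
  simp only [Rgen, mul_pow, fixed_pow hc, Finset.mul_sum]
  exact Finset.sum_congr rfl fun i _ => by ring

lemma E_smul {c : A} (hc : c ^ p = c) (x : A) :
    Egen p e a (c * x) = c * Egen p e a x := by
  simp only [Egen, R_smul hc, mul_pow, fixed_pow hc, mul_add, Finset.mul_sum]
  congr 1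
  exact Finset.sum_congr rfl fun i _ => by ring

lemma f_smul_left {c : A} (hc : c ^ p = c) (x y : A) :
    fgen p e a (c * x) y = c * fgen p e a x y := by
  simp only [fgen, mul_pow, fixed_pow hc, mul_neg, Finset.mul_sum, mul_add]
  congr 1
  refine Finset.sum_congr rfl fun i _ => ?_
  congr 1
  · exact Finset.sum_congr rfl fun i _ => by ring
  · ring

lemma f_smul_right {c : A} (hc : c ^ p = c) (x y : A) :
    fgen p e a x (c * y) = c * fgen p e a x y := by
  simp only [fgen, R_smul hc, mul_pow, fixed_pow hc, mul_neg, Finset.mul_sum, mul_add]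
  congr 1
  refine Finset.sum_congr rfl fun i _ => ?_
  congr 1
  · exact Finset.sum_congr rfl fun i _ => by ring
  · ring

lemma telescope (h : FrobP p A) (N : ℕ) (z : A) :
    (∑ i ∈ Finset.range N, z ^ p ^ i) ^ p - ∑ i ∈ Finset.range N, z ^ p ^ i = z ^ p ^ N - z := by
  rw [h.sum1, ← Finset.sum_sub_distrib]
  have := Finset.sum_range_sub (fun i => z ^ p ^ i) N
  simp only [pow_zero, pow_one] at this
  rw [← this]
  refine Finset.sum_congr rfl fun i _ => ?_
  rw [← pow_mul, ← pow_succ]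

/-- The key identity `f(x,y)^p - f(x,y) = x R(y) + y R(x) - x^{p^e} E(y)`. -/
lemma f_wp (h : FrobP p A) (x y : A) :
    fgen p e a x y ^ p - fgen p e a x y =
      x * Rgen p e a y + y * Rgen p e a x - x ^ p ^ e * Egen p e a y := by
  have h1 : fgen p e a x y ^ p - fgen p e a x y =
      -(∑ i ∈ Finset.range e, ((a i * x ^ p ^ i * y) ^ p ^ (e - i) - a i * x ^ p ^ i * y))
      - ((x * Rgen p e a y) ^ p ^ e - x * Rgen p e a y) := by
    have t1 : ∀ i, (a i * x ^ p ^ i * y) ^ p ^ (e - i) - a i * x ^ p ^ i * y =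
      (∑ j ∈ Finset.range (e - i), (a i * x ^ p ^ i * y) ^ p ^ j) ^ p
        - ∑ j ∈ Finset.range (e - i), (a i * x ^ p ^ i * y) ^ p ^ j :=
      fun i => (telescope h (e - i) (a i * x ^ p ^ i * y)).symm
    rw [← telescope h e, Finset.sum_congr (rfl : Finset.range e = Finset.range e) fun i _ => t1 i]
    simp only [fgen, h.neg1, h.add1, Finset.sum_add_distrib, Finset.sum_sub_distrib, h.sum1]
    ring
  rw [h1]
  have h2 : x ^ p ^ e * Egen p e a y = (x * Rgen p e a y) ^ p ^ e +
      (∑ i ∈ Finset.range e, (a i * x ^ p ^ i * y) ^ p ^ (e - i)) + a e * x ^ p ^ e * y := by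
    have t2 : ∀ i ∈ Finset.range e, x ^ p ^ e * (a i * y) ^ p ^ (e - i) =
        (a i * x ^ p ^ i * y) ^ p ^ (e - i) := by
      intro i hi
      have hi := Finset.mem_range.mp hi
      rw [mul_pow, mul_pow, mul_pow, ← pow_mul, ← pow_add]
      rw [show i + (e - i) = e by omega]
      ring
    rw [← Finset.sum_congr rfl t2, ← Finset.mul_sum, Egen, Finset.sum_range_succ, Nat.sub_self,
      pow_zero, pow_one, mul_pow]
    ring
  rw [h2]
  have h3 : y * Rgen p e a x = (∑ i ∈ Finset.range e, a i * x ^ p ^ i * y) + a e * x ^ p ^ e * y := by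
    rw [Rgen, Finset.sum_range_succ, mul_add, Finset.mul_sum]
    congr 1
    · exact Finset.sum_congr rfl fun i _ => by ring
    · ring
  rw [h3, Finset.sum_sub_distrib]
  ring

lemma R_zero (h : FrobP p A) : Rgen p e a 0 = 0 := by simp [Rgen, h.zero]
lemma E_zero (h : FrobP p A) : Egen p e a 0 = 0 := by
  have := E_add (e := e) (a := a) h 0 0; simpa using this
lemma f_zero_left (h : FrobP p A) (y : A) : fgen p e a 0 y = 0 := by
  have := f_add_left (e := e) (a := a) h 0 0 y; simpa using this
lemma f_zero_right (h : FrobP p A) (x : A) : fgen p e a x 0 = 0 := by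
  have := f_add_right (e := e) (a := a) h x 0 0; simpa using this
lemma R_neg (h : FrobP p A) (x : A) : Rgen p e a (-x) = - Rgen p e a x := by
  have := R_add (e := e) (a := a) h x (-x); rw [add_neg_cancel, R_zero h] at this
  exact (neg_eq_of_add_eq_zero_right this.symm).symm
lemma E_neg (h : FrobP p A) (x : A) : Egen p e a (-x) = - Egen p e a x := by
  have := E_add (e := e) (a := a) h x (-x); rw [add_neg_cancel, E_zero h] at this
  exact (neg_eq_of_add_eq_zero_right this.symm).symm
lemma f_neg_left (h : FrobP p A) (x y : A) : fgen p e a (-x) y = - fgen p e a x y := by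
  have := f_add_left (e := e) (a := a) h x (-x) y; rw [add_neg_cancel, f_zero_left h] at this
  exact (neg_eq_of_add_eq_zero_right this.symm).symm
lemma f_neg_right (h : FrobP p A) (x y : A) : fgen p e a x (-y) = - fgen p e a x y := by
  have := f_add_right (e := e) (a := a) h x y (-y); rw [add_neg_cancel, f_zero_right h] at this
  exact (neg_eq_of_add_eq_zero_right this.symm).symm

/-- Frobenius compatibility, for coefficients fixed by `p^j`-power. -/
lemma R_frob (h : FrobP p A) (j : ℕ) (ha : ∀ i, a i ^ p ^ j = a i) (x : A) :
    Rgen p e a x ^ p ^ j = Rgen p e a (x ^ p ^ j) := by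
  obtain ⟨φ, hφ⟩ := h j
  rw [← hφ, R_map]; simp only [hφ, ha]
lemma E_frob (h : FrobP p A) (j : ℕ) (ha : ∀ i, a i ^ p ^ j = a i) (x : A) :
    Egen p e a x ^ p ^ j = Egen p e a (x ^ p ^ j) := by
  obtain ⟨φ, hφ⟩ := h j
  rw [← hφ, E_map]; simp only [hφ, ha]
lemma f_frob (h : FrobP p A) (j : ℕ) (ha : ∀ i, a i ^ p ^ j = a i) (x y : A) :
    fgen p e a x y ^ p ^ j = fgen p e a (x ^ p ^ j) (y ^ p ^ j) := by
  obtain ⟨φ, hφ⟩ := h j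
  rw [← hφ, f_map]; simp only [hφ, ha]

end basic


lemma ncard_roots {K : Type*} [Field K] (P : K[X]) (hs : P.Separable) (hsp : P.Splits) :
    {x : K | P.eval x = 0}.ncard = P.natDegree := by
  classical
  have h1 := card_rootSet_eq_natDegree (K := K) hs (by simpa using hsp)
  rw [← h1, ← Nat.card_eq_fintype_card, Nat.card_coe_set_eq]
  congr 1
  ext x
  simp [mem_rootSet, hs.ne_zero]

lemma separable_of_derivative {K : Type*} [Field K] (P : K[X]) (c : K) (hc : c ≠ 0)
    (hd : derivative P = C c) : P.Separable := by
  rw [Polynomial.Separable, hd]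
  exact (isCoprime_one_right (x := P)).mono dvd_rfl (by
    exact ⟨C c⁻¹, by rw [← C_mul, mul_inv_cancel₀ hc, C_1]⟩) |>.symm |>.symm

section polys
variable {K : Type*} [Field K] {p e : ℕ} {α : ℕ → K}

lemma eval_E (x : K) : (Egen p e (fun i => C (α i)) X : K[X]).eval x = Egen p e α x := by
  have := E_map (p := p) (e := e) (a := fun i => (C (α i) : K[X])) (evalRingHom x) X
  simpa using this

lemma eval_f (P Q : K[X]) (x : K) : (fgen p e (fun i => C (α i)) P Q : K[X]).eval x
    = fgen p e α (P.eval x) (Q.eval x) := by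
  have := f_map (p := p) (e := e) (a := fun i => (C (α i) : K[X])) (evalRingHom x) P Q
  simpa using this

lemma natDegree_R_le (hp : 2 ≤ p) : (Rgen p e (fun i => C (α i)) X : K[X]).natDegree ≤ p ^ e := by
  unfold Rgen
  refine natDegree_sum_le_of_forall_le _ _ fun i hi => ?_
  refine (natDegree_C_mul_X_pow_le _ _).trans ?_
  exact Nat.pow_le_pow_right (by omega) (by simpa [Nat.lt_succ_iff] using hi)

lemma natDegree_R (hp : 2 ≤ p) (hα : α e ≠ 0) :
    (Rgen p e (fun i => C (α i)) X : K[X]).natDegree = p ^ e := by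
  unfold Rgen
  rw [Finset.sum_range_succ]
  rcases Nat.eq_zero_or_pos e with he | he
  · subst he; simp [natDegree_C_mul_X _ hα]
  · rw [natDegree_add_eq_right_of_natDegree_lt, natDegree_C_mul_X_pow _ _ hα]
    rw [natDegree_C_mul_X_pow _ _ hα]
    refine lt_of_le_of_lt (natDegree_sum_le_of_forall_le (n := p ^ (e - 1)) _ _ fun i hi => ?_) ?_
    · refine (natDegree_C_mul_X_pow_le _ _).trans ?_
      exact Nat.pow_le_pow_right (by omega) (by have := Finset.mem_range.mp hi; omega)
    · exact Nat.pow_lt_pow_right (by omega) (by omega)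

lemma natDegree_E (hp : 2 ≤ p) (hα : α e ≠ 0) (hne : e = 0 → (2 : K) ≠ 0) :
    (Egen p e (fun i => C (α i)) X : K[X]).natDegree = p ^ (2 * e) := by
  rcases Nat.eq_zero_or_pos e with he | he
  · subst he
    have : (Egen p 0 (fun i => C (α i)) X : K[X]) = C (2 * α 0) * X := by
      simp [Egen, Rgen, show (C (2 : K) : K[X]) = 2 from rfl]; ring
    rw [this, natDegree_C_mul_X _ (mul_ne_zero (hne rfl) hα)]; simp
  · unfold Egen
    have h1 : ((Rgen p e (fun i => C (α i)) X : K[X]) ^ p ^ e).natDegree = p ^ (2 * e) := by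
      rw [natDegree_pow, natDegree_R hp hα, ← pow_add]; congr 1; ring
    rw [natDegree_add_eq_left_of_natDegree_lt, h1]
    rw [h1]
    refine lt_of_le_of_lt (natDegree_sum_le_of_forall_le (n := p ^ e) _ _ fun i hi => ?_) ?_
    · refine natDegree_pow_le.trans ?_
      calc p ^ (e - i) * (C (α i) * X : K[X]).natDegree ≤ p ^ e * 1 :=
            Nat.mul_le_mul (Nat.pow_le_pow_right (by omega) (by omega)) (by simpa using natDegree_C_mul_X_pow_le (α i) 1)
        _ = _ := mul_one _
    · exact Nat.pow_lt_pow_right (by omega) (by omega)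

lemma derivative_E (hpK : (p : K) = 0) : ∃ c, derivative (Egen p e (fun i => C (α i)) X : K[X]) = C c
    ∧ c = if e = 0 then 2 * α 0 else α e := by
  refine ⟨_, ?_, rfl⟩
  split_ifs with he
  · subst he
    have : (Egen p 0 (fun i => C (α i)) X : K[X]) = C (2 * α 0) * X := by
      simp [Egen, Rgen, show (C (2 : K) : K[X]) = 2 from rfl]; ring
    rw [this]; simp
  · have key : ∀ (P : K[X]) (j : ℕ), j ≠ 0 → derivative (P ^ p ^ j) = 0 := by
      intro P j hj
      rw [derivative_pow]
      simp [hpK, hj]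
    unfold Egen
    rw [derivative_add, key _ _ he, zero_add, Finset.sum_range_succ, derivative_add, derivative_sum,
      Finset.sum_eq_zero, zero_add]
    · simp
    · intro i hi
      exact key _ _ (by have := Finset.mem_range.mp hi; omega)

lemma separable_E (hpK : (p : K) = 0) (hα : α e ≠ 0) (hne : e = 0 → (2 : K) ≠ 0) :
    (Egen p e (fun i => C (α i)) X : K[X]).Separable := by
  obtain ⟨c, hc, hc'⟩ := derivative_E (e := e) (α := α) hpK
  refine separable_of_derivative _ c ?_ hc
  rw [hc']
  split_ifs with he
  · subst he; exact mul_ne_zero (hne rfl) hα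
  · exact hα

lemma natDegree_f_le {P Q : K[X]} {dP dQ dR : ℕ} (hP : P.natDegree ≤ dP)
    (hQ : Q.natDegree ≤ dQ) (hR : (Rgen p e (fun i => C (α i)) Q : K[X]).natDegree ≤ dR) (D : ℕ)
    (h1 : ∀ i < e, ∀ j < e - i, p ^ j * (p ^ i * dP + dQ) ≤ D)
    (h2 : ∀ i < e, p ^ i * (dP + dR) ≤ D) :
    (fgen p e (fun i => C (α i)) P Q : K[X]).natDegree ≤ D := by
  unfold fgen
  rw [natDegree_neg]
  refine natDegree_sum_le_of_forall_le _ _ fun i hi => ?_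
  have hi := Finset.mem_range.mp hi
  refine natDegree_add_le_of_degree_le ?_ ?_
  · refine natDegree_sum_le_of_forall_le _ _ fun j hj => ?_
    have hj := Finset.mem_range.mp hj
    refine natDegree_pow_le.trans (le_trans (Nat.mul_le_mul le_rfl ?_) (h1 i hi j hj))
    refine natDegree_mul_le.trans (Nat.add_le_add ?_ hQ)
    refine (natDegree_C_mul_le _ _).trans (natDegree_pow_le.trans (Nat.mul_le_mul le_rfl hP))
  · refine natDegree_pow_le.trans (le_trans (Nat.mul_le_mul le_rfl ?_) (h2 i hi))
    exact natDegree_mul_le.trans (Nat.add_le_add hP hR)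

lemma ncard_V [IsAlgClosed K] (hp : 2 ≤ p) (hpK : (p : K) = 0) (hα : α e ≠ 0)
    (hne : e = 0 → (2 : K) ≠ 0) : {x : K | Egen p e α x = 0}.ncard = p ^ (2 * e) := by
  rw [← natDegree_E hp hα hne, ← ncard_roots _ (separable_E hpK hα hne) (IsAlgClosed.splits _)]
  simp only [eval_E]

lemma separable_XpX (hpK : (p : K) = 0) : (X ^ p - X : K[X]).Separable := by
  refine separable_of_derivative _ (-1) (by simp) ?_
  rw [derivative_sub, derivative_X_pow, hpK]; simp

lemma ncard_fixed (hp : 2 ≤ p) (hpK : (p : K) = 0) (hsp : (X ^ p - X : K[X]).Splits) :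
    {x : K | x ^ p = x}.ncard = p := by
  have h1 := ncard_roots _ (separable_XpX hpK) hsp
  rw [FiniteField.X_pow_card_sub_X_natDegree_eq _ (by omega)] at h1
  simpa [sub_eq_zero] using h1

/-- non-degeneracy of the commutator pairing -/
lemma omega_nondeg (h : FrobP p K) (hp : 2 ≤ p)
    (hV : {x : K | Egen p e α x = 0}.ncard = p ^ (2 * e)) (hinf : ∃ x : K, Egen p e α x ≠ 0)
    (v : K) (hv : Egen p e α v = 0)
    (hω : ∀ y, Egen p e α y = 0 → fgen p e α v y = fgen p e α y v) : v = 0 := by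
  have hfin : {x : K | Egen p e α x = 0}.Finite := by
    refine Set.finite_of_ncard_pos ?_
    rw [hV]; positivity
  rcases Nat.eq_zero_or_pos e with he | he
  · subst he
    simp only [mul_zero, pow_zero] at hV
    obtain ⟨w, hw⟩ := Set.ncard_eq_one.mp hV
    have e1 : v ∈ ({w} : Set K) := hw ▸ hv
    have e2 : (0 : K) ∈ ({w} : Set K) := hw ▸ (E_zero h : Egen p 0 α 0 = 0)
    simp at e1 e2
    rw [e1, ← e2]
  set G : K[X] := fgen p e (fun i => C (α i)) X (C v) - fgen p e (fun i => C (α i)) (C v) X with hG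
  have hpp : ∀ i j, i ≤ j → p ^ i ≤ p ^ j := fun i j hij => Nat.pow_le_pow_right (by omega) hij
  have hRv : (Rgen p e (fun i => C (α i)) (C v) : K[X]).natDegree ≤ 0 := by
    have := R_map (p := p) (e := e) (a := α) (C : K →+* K[X]) v
    rw [← this]; simp
  have d1 : (fgen p e (fun i => C (α i)) X (C v) : K[X]).natDegree ≤ p ^ (2 * e - 1) := by
    refine natDegree_f_le (natDegree_X_le) (natDegree_C v).le hRv _ ?_ ?_
    · intro i hi j hj
      rw [add_zero, mul_one, ← pow_add]; exact hpp _ _ (by omega)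
    · intro i hi
      rw [add_zero, mul_one]; exact hpp _ _ (by omega)
  have d2 : (fgen p e (fun i => C (α i)) (C v) X : K[X]).natDegree ≤ p ^ (2 * e - 1) := by
    refine natDegree_f_le (natDegree_C v).le (natDegree_X_le) (natDegree_R_le hp) _ ?_ ?_
    · intro i hi j hj
      rw [mul_zero, zero_add, mul_one]; exact hpp _ _ (by omega)
    · intro i hi
      rw [zero_add, ← pow_add]; exact hpp _ _ (by omega)
  have hdeg : G.natDegree < hfin.toFinset.card := by
    rw [← Set.ncard_eq_toFinset_card _ hfin, hV]
    refine lt_of_le_of_lt (natDegree_sub_le_of_le d1 d2) ?_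
    rw [max_self]
    exact Nat.pow_lt_pow_right (by omega) (by omega)
  have hG0 : G = 0 := by
    refine eq_zero_of_natDegree_lt_card_of_eval_eq_zero' G hfin.toFinset ?_ hdeg
    intro y hy
    have hy : Egen p e α y = 0 := by simpa using hy
    rw [hG, eval_sub, eval_f, eval_f]; simp [hω y hy]
  obtain ⟨x, hx⟩ := hinf
  have hz : fgen p e α x v = fgen p e α v x := by
    have := congrArg (eval x) hG0
    rw [hG, eval_sub, eval_f, eval_f] at this
    simpa [sub_eq_zero] using this
  have k1 := f_wp (e := e) (a := α) h x v
  have k2 := f_wp (e := e) (a := α) h v x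
  rw [hz] at k1
  rw [hv] at k1
  have : v ^ p ^ e * Egen p e α x = 0 := by linear_combination k2 - k1
  rcases mul_eq_zero.mp this with h' | h'
  · exact pow_eq_zero_iff (by positivity) |>.mp h'
  · exact absurd h' hx

/-- The subfield fixed by `x ↦ x^p`. -/
def PK (h : FrobP p K) (hp : 2 ≤ p) : Subfield K where
  carrier := {x | x ^ p = x}
  mul_mem' := by intro x y hx hy; simp only [Set.mem_ofPred_eq] at *; rw [mul_pow, hx, hy]
  one_mem' := by simp
  add_mem' := by intro x y hx hy; simp only [Set.mem_ofPred_eq] at *; rw [h.add1, hx, hy]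
  zero_mem' := by simp; omega
  neg_mem' := by intro x hx; simp only [Set.mem_ofPred_eq] at *; rw [h.neg1, hx]
  inv_mem' := by intro x hx; simp only [Set.mem_ofPred_eq] at *; rw [inv_pow, hx]

lemma PK_pow (h : FrobP p K) (hp : 2 ≤ p) (c : PK h hp) : (c : K) ^ p = c := c.2

/-- `V_R` as a subspace. -/
def VK (h : FrobP p K) (hp : 2 ≤ p) (e : ℕ) (α : ℕ → K) : Submodule (PK h hp) K where
  carrier := {x | Egen p e α x = 0}
  add_mem' := by intro x y hx hy; simp only [Set.mem_ofPred_eq] at *; rw [E_add h, hx, hy, add_zero]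
  zero_mem' := E_zero h
  smul_mem' := by
    intro c x hx
    simp only [Set.mem_ofPred_eq] at *
    rw [show c • x = (c : K) * x from rfl, E_smul (PK_pow h hp c), hx, mul_zero]

lemma omega_mem (h : FrobP p K) {x y : K} (hx : Egen p e α x = 0) (hy : Egen p e α y = 0) :
    (fgen p e α x y - fgen p e α y x) ^ p = fgen p e α x y - fgen p e α y x := by
  have k1 := f_wp (e := e) (a := α) h x y
  have k2 := f_wp (e := e) (a := α) h y x
  rw [hx] at k2; rw [hy] at k1
  rw [h.sub1]
  linear_combination k1 - k2

/-- The commutator pairing. -/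
def omegaB (h : FrobP p K) (hp : 2 ≤ p) (e : ℕ) (α : ℕ → K) :
    LinearMap.BilinForm (PK h hp) (VK h hp e α) :=
  LinearMap.mk₂ (PK h hp)
    (fun x y => (⟨fgen p e α x y - fgen p e α y x, omega_mem h x.2 y.2⟩ : PK h hp))
    (by intro x y z; ext; simp [f_add_left h, f_add_right h]; ring)
    (by
      intro c x z; ext
      have := PK_pow h hp c
      simp only [Submodule.coe_smul, Subfield.smul_def, smul_eq_mul, MulMemClass.coe_mul,
        f_smul_left this, f_smul_right this]
      ring)
    (by intro x y z; ext; simp [f_add_left h, f_add_right h]; ring)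
    (by
      intro c x z; ext
      have := PK_pow h hp c
      simp only [Submodule.coe_smul, Subfield.smul_def, smul_eq_mul, MulMemClass.coe_mul,
        f_smul_left this, f_smul_right this]
      ring)

lemma natCard_lagrangian {P V : Type*} [Field P] [AddCommGroup V] [Module P V] [Finite V]
    (B : LinearMap.BilinForm P V) (hB : B.Nondegenerate) (W : Submodule P V)
    (hW : B.orthogonal W = W) (e : ℕ) (hV : Nat.card V = Nat.card P ^ (2 * e))
    (hP : 1 < Nat.card P) : Nat.card W = Nat.card P ^ e := by
  have hfr : Module.finrank P V = 2 * e := by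
    have := Module.natCard_eq_pow_finrank (K := P) (V := V)
    rw [hV] at this
    exact (Nat.pow_right_injective hP this).symm
  have h1 := LinearMap.BilinForm.finrank_orthogonal hB W
  rw [hW, hfr] at h1
  have h2 := Submodule.finrank_le W
  rw [hfr] at h2
  have h3 : Module.finrank P W = e := by omega
  have h4 := Module.natCard_eq_pow_finrank (K := P) (V := W)
  rwa [h3] at h4

lemma lagr_card [IsAlgClosed K] (h : FrobP p K) (hp : 2 ≤ p) (hpK : (p : K) = 0) (hα : α e ≠ 0)
    (hne : e = 0 → (2 : K) ≠ 0) (Ab : Set K) (hsub : ∀ x ∈ Ab, Egen p e α x = 0)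
    (hmem : ∀ v, Egen p e α v = 0 →
      ((∀ a ∈ Ab, fgen p e α v a = fgen p e α a v) ↔ v ∈ Ab)) : Ab.ncard = p ^ e := by
  have hV := ncard_V hp hpK hα hne
  have hfin : {x : K | Egen p e α x = 0}.Finite := by
    refine Set.finite_of_ncard_pos ?_
    rw [hV]; positivity
  have hinf : ∃ x : K, Egen p e α x ≠ 0 := by
    obtain ⟨x, hx⟩ := hfin.exists_notMem
    exact ⟨x, hx⟩
  have hP : Nat.card (PK h hp) = p := ncard_fixed hp hpK (IsAlgClosed.splits _)
  have hVc : Nat.card (VK h hp e α) = p ^ (2 * e) := hV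
  have : Finite (VK h hp e α) := hfin
  have hnd : (omegaB h hp e α).Nondegenerate := by
    constructor
    · intro x hx
      refine Subtype.ext (omega_nondeg h hp hV hinf x x.2 fun y hy => ?_)
      have := congrArg Subtype.val (hx ⟨y, hy⟩)
      exact sub_eq_zero.mp this
    · intro x hx
      refine Subtype.ext (omega_nondeg h hp hV hinf x x.2 fun y hy => ?_)
      have := congrArg Subtype.val (hx ⟨y, hy⟩)
      exact (sub_eq_zero.mp this).symm
  obtain ⟨W, hWm⟩ : ∃ W : Submodule (PK h hp) (VK h hp e α), ∀ v, v ∈ W ↔ (v : K) ∈ Ab :=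
    ⟨{ carrier := {v | (v : K) ∈ Ab}
       add_mem' := by
        intro x y hx hy
        change (x : K) ∈ Ab at hx
        change (y : K) ∈ Ab at hy
        change ((x : K) + (y : K)) ∈ Ab
        refine (hmem _ (x + y).2).mp ?_
        intro a ha
        simp only [Submodule.coe_add]
        rw [f_add_left h, f_add_right h, (hmem _ x.2).mpr hx a ha, (hmem _ y.2).mpr hy a ha]
       zero_mem' := by
        change (0 : K) ∈ Ab
        refine (hmem _ (E_zero h)).mp ?_
        intro a ha
        simp [f_zero_left h, f_zero_right h]
       smul_mem' := by
        intro c x hx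
        change (x : K) ∈ Ab at hx
        change ((c : K) * (x : K)) ∈ Ab
        refine (hmem _ (c • x).2).mp ?_
        intro a ha
        have := PK_pow h hp c
        simp only [Submodule.coe_smul, Subfield.smul_def, smul_eq_mul,
          f_smul_left this, f_smul_right this]
        rw [(hmem _ x.2).mpr hx a ha] }, fun v => Iff.rfl⟩
  have hW : (omegaB h hp e α).orthogonal W = W := by
    ext v
    rw [LinearMap.BilinForm.mem_orthogonal_iff]
    rw [hWm, ← hmem _ v.2]
    constructor
    · intro hv a ha
      have := congrArg Subtype.val (hv ⟨a, hsub a ha⟩ ((hWm _).mpr ha))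
      exact (sub_eq_zero.mp this).symm
    · intro hv a ha
      refine Subtype.ext ?_
      exact sub_eq_zero.mpr (hv _ ((hWm _).mp ha)).symm
  have h4 := natCard_lagrangian (omegaB h hp e α) hnd W hW e (by rw [hVc, hP]) (by omega)
  rw [hP] at h4
  rw [← h4, ← Nat.card_coe_set_eq]
  refine Nat.card_congr ?_
  exact
    { toFun := fun x => ⟨⟨x.1, hsub x.1 x.2⟩, (hWm _).mpr x.2⟩
      invFun := fun x => ⟨x.1.1, (hWm _).mp x.2⟩
      left_inv := fun x => rfl
      right_inv := fun x => rfl }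

/-- Maximal abelian subgroups are Lagrangian. -/
lemma max_abelian_mem [IsAlgClosed K] (h : FrobP p K) (hp : 2 ≤ p)
    (S : Set (K × K)) (hSsub : S ⊆ Hset p e α) (hS0 : ((0 : K), (0 : K)) ∈ S)
    (hSmul : ∀ h ∈ S, ∀ h' ∈ S, Hmul p e α h h' ∈ S)
    (hSinv : ∀ h ∈ S, ∃ h' ∈ S, Hmul p e α h h' = (0, 0))
    (hScomm : ∀ h ∈ S, ∀ h' ∈ S, Hmul p e α h h' = Hmul p e α h' h)
    (hSmax : ∀ T : Set (K × K), T ⊆ Hset p e α → ((0 : K), (0 : K)) ∈ T →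
      (∀ h ∈ T, ∀ h' ∈ T, Hmul p e α h h' ∈ T) →
      (∀ h ∈ T, ∃ h' ∈ T, Hmul p e α h h' = (0, 0)) →
      (∀ h ∈ T, ∀ h' ∈ T, Hmul p e α h h' = Hmul p e α h' h) → S ⊆ T → T = S)
    (v : K) (hv : Egen p e α v = 0) :
    ((∀ a ∈ Prod.fst '' S, fgen p e α v a = fgen p e α a v) ↔ v ∈ Prod.fst '' S) := by
  have hcommf : ∀ x ∈ Prod.fst '' S, ∀ y ∈ Prod.fst '' S, fgen p e α x y = fgen p e α y x := by
    rintro _ ⟨x, hx, rfl⟩ _ ⟨y, hy, rfl⟩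
    have := congrArg Prod.snd (hScomm x hx y hy)
    simp only [Hmul] at this
    linear_combination this
  have hadd : ∀ x ∈ Prod.fst '' S, ∀ y ∈ Prod.fst '' S, x + y ∈ Prod.fst '' S := by
    rintro _ ⟨x, hx, rfl⟩ _ ⟨y, hy, rfl⟩
    exact ⟨_, hSmul x hx y hy, rfl⟩
  have hneg : ∀ x ∈ Prod.fst '' S, -x ∈ Prod.fst '' S := by
    rintro _ ⟨x, hx, rfl⟩
    obtain ⟨y, hy, hxy⟩ := hSinv x hx
    have := congrArg Prod.fst hxy
    simp only [Hmul] at this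
    exact ⟨y, hy, (neg_eq_of_add_eq_zero_right this).symm⟩
  have h0 : (0 : K) ∈ Prod.fst '' S := ⟨_, hS0, rfl⟩
  have hE : ∀ x ∈ Prod.fst '' S, Egen p e α x = 0 := by
    rintro _ ⟨x, hx, rfl⟩
    exact (hSsub hx).1
  constructor
  swap
  · intro hv a ha; exact hcommf v hv a ha
  intro hω
  obtain ⟨b, hb⟩ : ∃ b : K, b ^ p - b = v * Rgen p e α v := by
    obtain ⟨b, hb⟩ := IsAlgClosed.exists_root (X ^ p - X - C (v * Rgen p e α v) : K[X]) (by
      have : (X ^ p - X - C (v * Rgen p e α v) : K[X]).natDegree = p := by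
        rw [natDegree_sub_C, FiniteField.X_pow_card_sub_X_natDegree_eq _ (by omega)]
      intro h0
      have h2 := natDegree_eq_zero_iff_degree_le_zero.mpr h0.le
      omega)
    refine ⟨b, ?_⟩
    simpa [sub_eq_zero] using hb
  let D : AddSubgroup K :=
    { carrier := Prod.fst '' S
      add_mem' := fun {x y} hx hy => hadd x hx y hy
      zero_mem' := h0
      neg_mem' := fun {x} hx => hneg x hx }
  let D' : AddSubgroup K := D ⊔ AddSubgroup.zmultiples v
  have hfc : ∀ x ∈ D', ∀ y ∈ D', fgen p e α x y = fgen p e α y x := by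
    let cen : K → AddSubgroup K := fun y =>
      { carrier := {x | fgen p e α x y = fgen p e α y x}
        add_mem' := by
          intro x x' hx hx'
          simp only [Set.mem_ofPred_eq] at *
          rw [f_add_left h, f_add_right h, hx, hx']
        zero_mem' := by simp [f_zero_left h, f_zero_right h]
        neg_mem' := by
          intro x hx
          simp only [Set.mem_ofPred_eq] at *
          rw [f_neg_left h, f_neg_right h, hx] }
    have hD1 : ∀ y ∈ D, D' ≤ cen y := by
      intro y hy
      refine sup_le (fun x hx => hcommf x hx y hy) ?_
      rw [AddSubgroup.zmultiples_le]
      exact hω y hy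
    have hD2 : D' ≤ cen v := by
      refine sup_le (fun x hx => (hω x hx).symm) ?_
      rw [AddSubgroup.zmultiples_le]
      exact (rfl : fgen p e α v v = fgen p e α v v)
    intro x hx
    have : D' ≤ cen x := by
      refine sup_le (fun y hy => (hD1 y hy hx : fgen p e α x y = fgen p e α y x).symm) ?_
      rw [AddSubgroup.zmultiples_le]
      exact (hD2 hx : fgen p e α x v = fgen p e α v x).symm
    intro y hy
    exact (this hy : fgen p e α y x = fgen p e α x y).symm
  have hT := hSmax {z | z ∈ Hset p e α ∧ z.1 ∈ D'} (fun z hz => hz.1)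
    ⟨hSsub hS0, D'.zero_mem⟩
    (by
      rintro ⟨x, y⟩ ⟨⟨h1, h2⟩, h3⟩ ⟨x', y'⟩ ⟨⟨h1', h2'⟩, h3'⟩
      simp only at h1 h2 h3 h1' h2' h3'
      refine ⟨⟨?_, ?_⟩, D'.add_mem h3 h3'⟩
      · simp only [Hmul]; rw [E_add h, h1, h1', add_zero]
      · simp only [Hmul]
        have k := f_wp (e := e) (a := α) h x x'
        rw [h1'] at k
        rw [h.add1, h.add1, R_add h]
        linear_combination h2 + h2' + k)
    (by
      rintro ⟨x, y⟩ ⟨⟨h1, h2⟩, h3⟩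
      simp only at h1 h2 h3
      refine ⟨(-x, -y + fgen p e α x x), ⟨⟨?_, ?_⟩, D'.neg_mem h3⟩, ?_⟩
      · simp only; rw [E_neg h, h1, neg_zero]
      · simp only
        have k := f_wp (e := e) (a := α) h x x
        rw [h1] at k
        rw [h.add1, h.neg1, R_neg h]
        linear_combination -h2 + k
      · simp only [Hmul, f_neg_right h]
        ext <;> simp)
    (by
      rintro ⟨x, y⟩ ⟨-, h3⟩ ⟨x', y'⟩ ⟨-, h3'⟩
      simp only [Hmul]
      rw [hfc x h3 x' h3', add_comm x, add_comm y])
    (fun z hz => ⟨hSsub hz, (le_sup_left : D ≤ D') ⟨z, hz, rfl⟩⟩)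
  have : ((v, b) : K × K) ∈ S := by
    rw [← hT]
    exact ⟨⟨hv, hb⟩, (le_sup_right : _ ≤ D') (AddSubgroup.mem_zmultiples v)⟩
  exact ⟨_, this, rfl⟩

end polys


lemma V_fixed {K : Type*} [Field K] {p e : ℕ} {α : ℕ → K} (h : FrobP p K) (p₀ : ℕ)
    (hp0 : (p₀ : K) = 0) (Ab : Set K) (hsub : ∀ x ∈ Ab, Egen p e α x = 0)
    (hmem : ∀ v, Egen p e α v = 0 →
      ((∀ a ∈ Ab, fgen p e α v a = fgen p e α a v) ↔ v ∈ Ab))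
    (j : ℕ) (hα : ∀ i, α i ^ p ^ j = α i) (hfix : ∀ a ∈ Ab, a ^ p ^ j = a)
    (v : K) (hv : Egen p e α v = 0) : v ^ p ^ (j * p₀) = v := by
  have hfixP : ∀ {c : K}, c ^ p = c → c ^ p ^ j = c := fun hc => fixed_pow hc j
  have hvj : Egen p e α (v ^ p ^ j) = 0 := by rw [← E_frob h j hα, hv, h.zero]
  have hδE : Egen p e α (v ^ p ^ j - v) = 0 := by
    rw [sub_eq_add_neg, E_add h, E_neg h, hvj, hv]; simp
  have hδ : v ^ p ^ j - v ∈ Ab := by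
    rw [← hmem _ hδE]
    intro a ha
    have h1 := hfixP (omega_mem h hv (hsub a ha))
    rw [h.sub, f_frob h j hα, f_frob h j hα, hfix a ha] at h1
    rw [sub_eq_add_neg, f_add_left h, f_add_right h, f_neg_left h, f_neg_right h]
    linear_combination h1
  have key : ∀ k : ℕ, v ^ p ^ (j * k) = v + k * (v ^ p ^ j - v) := by
    intro k
    induction k with
    | zero => simp
    | succ k ih =>
      rw [mul_add, mul_one, pow_add, pow_mul, ih, h.add, mul_pow, hfix _ hδ]
      have : (k : K) ^ p ^ j = k := by
        obtain ⟨φ, hφ⟩ := h j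
        rw [← hφ, map_natCast]
      rw [this]; push_cast; ring
  rw [key, hp0]; simp

section chars
open scoped Classical
variable {k : Type*} [Field k] [Fintype k] {p : ℕ}

/-- Additive characters invariant under `z ↦ z^p`. -/
noncomputable def Xs (k : Type*) [Field k] [Fintype k] (p : ℕ) : Finset (AddChar k ℂ) :=
  Finset.univ.filter fun Ψ => ∀ z, Ψ (z ^ p) = Ψ z

lemma mem_Xs {Ψ : AddChar k ℂ} : Ψ ∈ Xs k p ↔ ∀ z, Ψ (z ^ p) = Ψ z := by simp [Xs]

lemma sum_Xs (h : FrobP p k) (z : k) :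
    ((Finset.univ.filter fun y : k => y ^ p - y = z).card : ℂ) = ∑ Ψ ∈ Xs k p, Ψ z := by
  have hk : (Fintype.card k : ℂ) ≠ 0 := by exact_mod_cast Fintype.card_ne_zero
  have h1 : ∑ y : k, ∑ Ψ : AddChar k ℂ, Ψ (z - (y ^ p - y)) =
      (Fintype.card k : ℂ) * (Finset.univ.filter fun y : k => y ^ p - y = z).card := by
    simp only [AddChar.sum_apply_eq_ite]
    rw [← Finset.sum_filter, Finset.sum_const, nsmul_eq_mul, mul_comm]
    congr 3
    ext y
    simp [sub_eq_zero, eq_comm]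
  have h2 : ∀ Ψ : AddChar k ℂ, ∑ y : k, Ψ (z - (y ^ p - y)) =
      if Ψ ∈ Xs k p then (Fintype.card k : ℂ) * Ψ z else 0 := by
    intro Ψ
    let Ψ' : AddChar k ℂ :=
      { toFun := fun y => Ψ (-(y ^ p - y))
        map_zero_eq_one' := by
          have := h.zero 1
          rw [pow_one] at this
          simp [this]
        map_add_eq_mul' := by
          intro x y
          rw [← AddChar.map_add_eq_mul, h.add1]
          congr 1; ring }
    have h3 : ∑ y : k, Ψ (z - (y ^ p - y)) = Ψ z * ∑ y, Ψ' y := by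
      rw [Finset.mul_sum]
      refine Finset.sum_congr rfl fun y _ => ?_
      rw [sub_eq_add_neg, AddChar.map_add_eq_mul]; rfl
    rw [h3, AddChar.sum_eq_ite]
    have h4 : Ψ' = 0 ↔ Ψ ∈ Xs k p := by
      rw [mem_Xs, AddChar.eq_zero_iff]
      refine forall_congr' fun y => ?_
      change Ψ (-(y ^ p - y)) = 1 ↔ _
      rw [neg_sub, AddChar.map_sub_eq_div, div_eq_one_iff_eq (AddChar.val_isUnit _ _).ne_zero]
      exact eq_comm
    simp only [h4]
    split_ifs <;> ring
  rw [Finset.sum_comm, Finset.sum_congr rfl fun Ψ _ => h2 Ψ, ← Finset.sum_filter] at h1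
  rw [← mul_right_inj' hk, ← h1, Finset.mul_sum]
  refine Finset.sum_congr ?_ fun _ _ => rfl
  ext; simp

lemma Xs_pow {Ψ : AddChar k ℂ} (hΨ : Ψ ∈ Xs k p) (i : ℕ) (z : k) : Ψ (z ^ p ^ i) = Ψ z := by
  induction i with
  | zero => simp
  | succ i ih => rw [pow_succ, pow_mul, mem_Xs.mp hΨ, ih]

lemma Xs_wp {Ψ : AddChar k ℂ} (hΨ : Ψ ∈ Xs k p) (z : k) : Ψ (z ^ p - z) = 1 := by
  rw [AddChar.map_sub_eq_div, mem_Xs.mp hΨ, div_self (AddChar.val_isUnit _ _).ne_zero]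

lemma card_fixed (hp : 2 ≤ p) (hpk : (p : k) = 0) {m : ℕ} (hm : m ≠ 0)
    (hk : Fintype.card k = p ^ m) : (Finset.univ.filter fun y : k => y ^ p = y).card = p := by
  have hd : (X ^ p - X : k[X]) ∣ X ^ Fintype.card k - X := by
    rw [hk]
    have : ∀ j, (X ^ p - X : k[X]) ∣ X ^ p ^ (j + 1) - X := by
      intro j
      induction j with
      | zero => simp
      | succ j ih =>
        have e1 : (X ^ p ^ (j + 1 + 1) - X : k[X]) =
            ((X ^ p ^ (j + 1)) ^ p - X ^ p) + (X ^ p - X) := by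
          rw [← pow_mul, ← pow_succ]; ring
        rw [e1]
        exact dvd_add (ih.trans (sub_dvd_pow_sub_pow _ _ _)) dvd_rfl
    obtain ⟨j, rfl⟩ := Nat.exists_eq_succ_of_ne_zero hm
    exact this j
  have hsp : (X ^ p - X : k[X]).Splits := by
    refine Polynomial.Splits.of_dvd ?_ (FiniteField.X_pow_card_sub_X_ne_zero k Fintype.one_lt_card) hd
    have := (FiniteField.isSplittingField_sub k k).splits
    simpa using this
  have := ncard_fixed hp hpk hsp
  rw [← Set.ncard_coe_finset]
  convert this using 2
  ext; simp

lemma card_Xs (h : FrobP p k) (hp : 2 ≤ p) (hpk : (p : k) = 0) {m : ℕ} (hm : m ≠ 0)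
    (hk : Fintype.card k = p ^ m) : (Xs k p).card = p := by
  have h1 := sum_Xs h (0 : k)
  simp only [AddChar.map_zero_eq_one, Finset.sum_const, nsmul_eq_mul, mul_one, sub_eq_zero] at h1
  rw [card_fixed hp hpk hm hk] at h1
  exact_mod_cast h1.symm

lemma one_mem_Xs : (1 : AddChar k ℂ) ∈ Xs k p := by simp [mem_Xs]

/-- Counting points through the invariant characters. -/
lemma count_points (h : FrobP p k) (hp : 2 ≤ p) (hpk : (p : k) = 0) {m : ℕ} (hm : m ≠ 0)
    (hk : Fintype.card k = p ^ m) {ι : Type*} [Fintype ι] (g : ι → k) (S : ℂ)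
    (hS : ∀ Ψ ∈ Xs k p, Ψ ≠ 1 → ∑ x, Ψ (g x) = S) :
    ((Finset.univ.filter fun z : ι × k => z.2 ^ p - z.2 = g z.1).card : ℂ) =
      Fintype.card ι + ((p : ℂ) - 1) * S := by
  have h1 : ((Finset.univ.filter fun z : ι × k => z.2 ^ p - z.2 = g z.1).card : ℂ) =
      ∑ x : ι, ((Finset.univ.filter fun y : k => y ^ p - y = g x).card : ℂ) := by
    simp only [Finset.card_filter, Nat.cast_sum]
    rw [Fintype.sum_prod_type]
  rw [h1, Finset.sum_congr rfl fun x _ => sum_Xs h (g x), Finset.sum_comm,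
    ← Finset.add_sum_erase _ _ (one_mem_Xs)]
  rw [Finset.sum_congr rfl (fun Ψ hΨ => hS Ψ (Finset.mem_of_mem_erase hΨ)
    (Finset.ne_of_mem_erase hΨ)), Finset.sum_const, Finset.card_erase_of_mem one_mem_Xs,
    card_Xs h hp hpk hm hk, nsmul_eq_mul, Nat.cast_sub (by omega)]
  simp

end chars

section gauss
open scoped Classical
variable {k : Type*} [Field k] [Fintype k]

/-- A sum that is multiplied by a constant `≠ 1` under a translation vanishes. -/
lemma sum_zero_of_translate {G : Type*} [AddCommGroup G] (s : Finset G) (t : G)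
    (hs : ∀ x, x ∈ s ↔ x + t ∈ s) (g : G → ℂ) (c : ℂ) (hc : c ≠ 1)
    (hg : ∀ x ∈ s, g (x + t) = c * g x) : ∑ x ∈ s, g x = 0 := by
  have h1 : ∑ x ∈ s, g (x + t) = ∑ x ∈ s, g x :=
    Finset.sum_equiv (Equiv.addRight t) (fun x => by simpa using hs x) (fun x _ => rfl)
  rw [Finset.sum_congr rfl hg, ← Finset.mul_sum] at h1
  have h2 : (c - 1) * ∑ x ∈ s, g x = 0 := by rw [sub_mul, h1]; ring
  exact (mul_eq_zero.mp h2).resolve_left (sub_ne_zero.mpr hc)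

lemma card_norm_fibre {Q : ℕ} (hQ : 2 ≤ Q) (hk : Fintype.card k = Q ^ 2)
    (hfix : (Finset.univ.filter fun y : k => y ^ Q = y).card = Q) (t : k) (ht : t ^ Q = t)
    (ht0 : t ≠ 0) : (Finset.univ.filter fun w : k => w ^ (Q + 1) = t).card = Q + 1 := by
  set T : Finset k := (Finset.univ.filter fun y : k => y ^ Q = y).erase 0 with hT
  have hTc : T.card = Q - 1 := by
    rw [hT, Finset.card_erase_of_mem (by simp; omega), hfix]
  have hle : ∀ t ∈ T, (Finset.univ.filter fun w : k => w ^ (Q + 1) = t).card ≤ Q + 1 := by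
    intro t _
    have h1 := Polynomial.card_nthRoots (Q + 1) t
    refine le_trans ?_ h1
    refine le_trans (Finset.card_le_card ?_) (Multiset.toFinset_card_le _)
    intro w hw
    rw [Multiset.mem_toFinset, Polynomial.mem_nthRoots (by omega)]
    simpa using hw
  have hsum : ∑ t ∈ T, (Finset.univ.filter fun w : k => w ^ (Q + 1) = t).card =
      ∑ t ∈ T, (Q + 1) := by
    rw [Finset.sum_const, hTc, smul_eq_mul]
    have h2 : ((Finset.univ : Finset k).erase 0).card = Q ^ 2 - 1 := by
      rw [Finset.card_erase_of_mem (Finset.mem_univ _), Finset.card_univ, hk]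
    have h3 := Finset.card_eq_sum_card_fiberwise (f := fun w : k => w ^ (Q + 1))
      (s := (Finset.univ : Finset k).erase 0) (t := T) (by
        intro w hw
        have hw0 : w ≠ 0 := by simpa using hw
        simp only [hT, Finset.coe_erase, Set.mem_sdiff, Finset.mem_coe, Finset.mem_filter,
          Finset.mem_univ, true_and, Set.mem_singleton_iff]
        refine ⟨?_, pow_ne_zero _ hw0⟩
        have : w ^ Q ^ 2 = w := by rw [← hk]; exact FiniteField.pow_card w
        rw [← pow_mul, add_mul, one_mul, pow_add, ← sq, this, pow_succ, mul_comm])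
    rw [h2] at h3
    have h4 : Q ^ 2 - 1 = (Q - 1) * (Q + 1) := by
      obtain ⟨r, rfl⟩ : ∃ r, Q = r + 1 := ⟨Q - 1, by omega⟩
      simp only [Nat.add_sub_cancel]
      have : (r + 1) ^ 2 = r * (r + 1 + 1) + 1 := by ring
      omega
    rw [← h4, h3]
    refine Finset.sum_congr rfl fun t ht => ?_
    congr 1
    ext w
    simp only [Finset.mem_filter, Finset.mem_univ, true_and, Finset.mem_erase, and_true]
    refine ⟨fun h => ⟨?_, h⟩, fun h => h.2⟩
    rintro rfl
    rw [zero_pow (by omega)] at h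
    exact (Finset.ne_of_mem_erase ht) h.symm
  exact (Finset.sum_eq_sum_iff_of_le hle).mp hsum t (by simp [hT, ht, ht0])

lemma gauss_sum {Q : ℕ} (bar : k →+* k) (hbar : ∀ x, bar x = x ^ Q) (hQ4 : Q % 4 = 1)
    (hQ : 2 ≤ Q) (hk : Fintype.card k = Q ^ 2) (h2 : (2 : k) ≠ 0)
    (hfix : (Finset.univ.filter fun y : k => y ^ Q = y).card = Q)
    (Ψ : AddChar k ℂ) (hΨ : ∀ z, Ψ (z ^ Q) = Ψ z) (hΨ1 : Ψ ≠ 1) (c : k) (hc : c ^ Q = c)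
    (hc0 : c ≠ 0) : ∑ u, Ψ (c * u ^ 2) = -(Q : ℂ) := by
  have hbb : ∀ x, bar (bar x) = x := by
    intro x; rw [hbar, hbar, ← pow_mul, ← sq, ← hk, FiniteField.pow_card]
  obtain ⟨i, hi⟩ : ∃ i : k, i * i = -1 := by
    have : IsSquare (-1 : k) := by
      rw [FiniteField.isSquare_neg_one_iff, hk, Nat.pow_mod, hQ4]; norm_num
    obtain ⟨i, hi⟩ := this
    exact ⟨i, hi.symm⟩
  have hib : bar i = i := by
    rw [hbar]
    obtain ⟨r, hr⟩ : ∃ r, Q = 4 * r + 1 := ⟨Q / 4, by omega⟩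
    have : i ^ 4 = 1 := by linear_combination (i * i - 1) * hi
    rw [hr, pow_succ, pow_mul, this, one_pow, one_mul]
  have hcb : bar c = c := by rw [hbar, hc]
  have h2b : bar 2 = 2 := map_ofNat bar 2
  have hΨb : ∀ z, Ψ (bar z) = Ψ z := fun z => by rw [hbar, hΨ]
  have hhalf : ∀ z, Ψ ((z + bar z) / 2) = Ψ z := by
    intro z
    have e1 : (z + bar z) / 2 = z / 2 + bar (z / 2) := by rw [map_div₀, h2b]; ring
    rw [e1, AddChar.map_add_eq_mul, hΨb, ← AddChar.map_add_eq_mul]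
    congr 1; field_simp; ring
  set κ : k := - i * c / 2 with hκ
  have hi0 : i ≠ 0 := by rintro rfl; simp at hi
  have hκ0 : κ ≠ 0 := by rw [hκ]; exact div_ne_zero (mul_ne_zero (neg_ne_zero.mpr hi0) hc0) h2
  have hκb : bar κ = κ := by rw [hκ]; simp [hib, hcb, h2b]
  have step1 : ∑ u, Ψ (c * u ^ 2) = ∑ w, Ψ (κ * w ^ (Q + 1)) := by
    have hinj : Function.Injective fun u : k => u + i * bar u := by
      intro u v huv
      simp only at huv
      have h3 := congrArg bar huv
      simp only [map_add, map_mul, hib, hbb] at h3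
      have : 2 * (u - v) = 0 := by linear_combination huv - i * h3 + (u - v) * hi
      exact sub_eq_zero.mp ((mul_eq_zero.mp this).resolve_left h2)
    refine Fintype.sum_bijective _ (Finite.injective_iff_bijective.mp hinj) _ _ fun u => ?_
    rw [← hhalf, map_mul, map_pow, hcb, pow_succ _ Q, ← hbar, map_add, map_mul bar i, hib, hbb, hκ]
    congr 1
    linear_combination (c * (u ^ 2 + bar u ^ 2) / 2 + c * i * u * bar u / 2) * hi
  rw [step1]
  have hz : ∑ t ∈ Finset.univ.filter (fun y : k => y ^ Q = y), Ψ (κ * t) = 0 := by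
    obtain ⟨z, hz⟩ : ∃ z, Ψ z ≠ 1 := by
      by_contra hcon
      push Not at hcon
      exact hΨ1 (by ext z; simpa using hcon z)
    refine sum_zero_of_translate _ ((z + bar z) / 2 / κ) ?_ _ (Ψ z) hz ?_
    · intro x
      simp only [Finset.mem_filter, Finset.mem_univ, true_and, ← hbar]
      have : bar ((z + bar z) / 2 / κ) = (z + bar z) / 2 / κ := by
        simp [hbb, hκb, h2b, add_comm]
      rw [map_add, this, add_left_inj]
    · intro x _
      rw [mul_add, mul_div_cancel₀ _ hκ0, AddChar.map_add_eq_mul, hhalf, mul_comm]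
  set T := Finset.univ.filter (fun y : k => y ^ Q = y) with hT
  have hmaps : ∀ w ∈ (Finset.univ : Finset k), w ^ (Q + 1) ∈ T := by
    intro w _
    simp only [hT, Finset.mem_filter, Finset.mem_univ, true_and]
    have := hbb w
    rw [← hbar, pow_succ, ← hbar, map_mul, hbb, mul_comm]
  have step2 : ∑ w, Ψ (κ * w ^ (Q + 1)) = ∑ t ∈ T,
      ((Finset.univ.filter fun w : k => w ^ (Q + 1) = t).card : ℂ) * Ψ (κ * t) := by
    rw [← Finset.sum_fiberwise_of_maps_to hmaps]
    refine Finset.sum_congr rfl fun t _ => ?_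
    rw [← nsmul_eq_mul, ← Finset.sum_const]
    refine Finset.sum_congr rfl fun w hw => ?_
    rw [(Finset.mem_filter.mp hw).2]
  have h0T : (0 : k) ∈ T := by simp [hT]; omega
  have hf0 : (Finset.univ.filter fun w : k => w ^ (Q + 1) = 0).card = 1 := by
    rw [Finset.card_eq_one]
    exact ⟨0, by ext; simp⟩
  rw [step2, ← Finset.add_sum_erase _ _ h0T, hf0]
  rw [← Finset.add_sum_erase _ _ h0T] at hz
  have : ∑ t ∈ T.erase 0,
      ((Finset.univ.filter fun w : k => w ^ (Q + 1) = t).card : ℂ) * Ψ (κ * t) =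
      (Q + 1) * ∑ t ∈ T.erase 0, Ψ (κ * t) := by
    rw [Finset.mul_sum]
    refine Finset.sum_congr rfl fun t ht => ?_
    have ht1 := Finset.mem_of_mem_erase ht
    rw [card_norm_fibre hQ hk hfix t (Finset.mem_filter.mp ht1).2 (Finset.ne_of_mem_erase ht)]
    push_cast; ring
  rw [this]
  simp only [mul_zero, AddChar.map_zero_eq_one, Nat.cast_one] at hz ⊢
  linear_combination ((Q : ℂ) + 1) * hz
end gauss

section interp
open scoped Classical

lemma addpoly_zero {K : Type*} [Field K] {p : ℕ} (hp : 2 ≤ p) (n : ℕ) (c : ℕ → K) (A : Finset K)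
    (hA : p ^ n ≤ A.card) (h : ∀ a ∈ A, ∑ j ∈ Finset.range n, c j * a ^ p ^ j = 0) :
    ∀ j < n, c j = 0 := by
  rcases Nat.eq_zero_or_pos n with hn | hn
  · subst hn; intro j hj; omega
  set P : K[X] := ∑ j ∈ Finset.range n, C (c j) * X ^ p ^ j with hP
  have hdeg : P.natDegree ≤ p ^ (n - 1) := by
    refine Polynomial.natDegree_sum_le_of_forall_le _ _ fun j hj => ?_
    refine (Polynomial.natDegree_C_mul_X_pow_le _ _).trans ?_
    exact Nat.pow_le_pow_right (by omega) (by rw [Finset.mem_range] at hj; omega)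
  have hP0 : P = 0 := by
    refine Polynomial.eq_zero_of_natDegree_lt_card_of_eval_eq_zero' P A ?_ ?_
    · intro a ha
      rw [hP, Polynomial.eval_finsetSum]
      simpa using h a ha
    · refine lt_of_le_of_lt hdeg (lt_of_lt_of_le ?_ hA)
      exact Nat.pow_lt_pow_right (by omega) (by omega)
  intro j hj
  have h1 : P.coeff (p ^ j) = c j := by
    rw [hP, Polynomial.finsetSum_coeff]
    simp only [Polynomial.coeff_C_mul_X_pow]
    rw [Finset.sum_eq_single j]
    · simp
    · intro i _ hij
      rw [if_neg]
      intro hh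
      exact hij (Nat.pow_right_injective hp hh).symm
    · intro hh; exact absurd (Finset.mem_range.mpr hj) hh
  rw [← h1, hP0, Polynomial.coeff_zero]

lemma interp {F : Type*} [Field F] [Fintype F] {p e s : ℕ} (h : FrobP p F) (hp : 2 ≤ p)
    (hpF : (p : F) = 0) (hs : s ≠ 0) (hF : Fintype.card F = p ^ s)
    (A : Finset F) (hA0 : 0 ∈ A) (hAadd : ∀ x ∈ A, ∀ y ∈ A, x + y ∈ A)
    (hAsmul : ∀ c : F, c ^ p = c → ∀ x ∈ A, c * x ∈ A) (hAc : A.card = p ^ e)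
    (g : F → F) (hgadd : ∀ x y, g (x + y) = g x + g y)
    (hgsmul : ∀ c : F, c ^ p = c → ∀ x, g (c * x) = c * g x) :
    ∃ c : ℕ → F, ∀ a ∈ A, g a = ∑ j ∈ Finset.range e, c j * a ^ p ^ j := by
  let P := PK h hp
  have hPc : Nat.card P = p := by
    have := card_fixed hp hpF hs hF
    rw [← Set.ncard_coe_finset] at this
    refine Eq.trans ?_ this
    change Set.ncard _ = _
    congr 1
    ext; simp; rfl
  let W : Submodule P F :=
    { carrier := (A : Set F)
      add_mem' := fun {x y} hx hy => hAadd x hx y hy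
      zero_mem' := hA0
      smul_mem' := fun c x hx => hAsmul c (PK_pow h hp c) x hx }
  have hWc : Nat.card W = p ^ e := by
    rw [← hAc, ← Set.ncard_coe_finset]; rfl
  have hfW : Module.finrank P W = e := by
    have := Module.natCard_eq_pow_finrank (K := P) (V := W)
    rw [hWc, hPc] at this
    exact (Nat.pow_right_injective hp this).symm
  have hfF : Module.finrank P F = s := by
    have := Module.natCard_eq_pow_finrank (K := P) (V := F)
    rw [Nat.card_eq_fintype_card, hF, hPc] at this
    exact (Nat.pow_right_injective hp this).symm
  have hfH : Nat.card (W →ₗ[P] F) = (p ^ s) ^ e := by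
    rw [Module.natCard_eq_pow_finrank (K := P), Module.finrank_linearMap, hfW, hfF, hPc,
      ← pow_mul, mul_comm]
  have hcc : Nat.card (Fin e → F) = (p ^ s) ^ e := by
    rw [Nat.card_fun, Nat.card_eq_fintype_card, hF]; simp
  let ev : (Fin e → F) → (W →ₗ[P] F) := fun c =>
    { toFun := fun a => ∑ j : Fin e, c j * (a : F) ^ p ^ (j : ℕ)
      map_add' := by
        intro x y
        simp only [Submodule.coe_add, h.add, mul_add, Finset.sum_add_distrib]
      map_smul' := by
        intro d x
        have hd := PK_pow h hp d
        simp only [Submodule.coe_smul, RingHom.id_apply]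
        rw [show d • (x : F) = (d : F) * x from rfl, Subfield.smul_def, smul_eq_mul,
          Finset.mul_sum]
        refine Finset.sum_congr rfl fun j _ => ?_
        rw [mul_pow, fixed_pow hd]; ring }
  have hinj : Function.Injective ev := by
    intro c d hcd
    have h1 : ∀ a ∈ A, ∑ j ∈ Finset.range e,
        (if hj : j < e then c ⟨j, hj⟩ - d ⟨j, hj⟩ else 0) * a ^ p ^ j = 0 := by
      intro a ha
      have := LinearMap.congr_fun hcd (⟨a, ha⟩ : W)
      simp only [ev, LinearMap.coe_mk, AddHom.coe_mk] at this
      rw [Finset.sum_range]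
      simp only [Fin.is_lt, dite_true, sub_mul, Finset.sum_sub_distrib, Fin.eta]
      rw [this, sub_self]
    have h2 := addpoly_zero hp e _ A hAc.ge h1
    funext j
    have h3 := h2 j j.2
    rw [dif_pos j.2] at h3
    exact sub_eq_zero.mp h3
  have : Finite (W →ₗ[P] F) := Nat.finite_of_card_ne_zero (by rw [hfH]; positivity)
  have hbij : Function.Bijective ev :=
    (Nat.bijective_iff_injective_and_card ev).mpr ⟨hinj, by rw [hcc, hfH]⟩
  let gl : W →ₗ[P] F :=
    { toFun := fun a => g a
      map_add' := fun x y => by simp [hgadd]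
      map_smul' := fun c x => by
        rw [Submodule.coe_smul]
        exact hgsmul c (PK_pow h hp c) x }
  obtain ⟨c, hc⟩ := hbij.2 gl
  refine ⟨fun j => if hj : j < e then c ⟨j, hj⟩ else 0, fun a ha => ?_⟩
  have := LinearMap.congr_fun hc (⟨a, ha⟩ : W)
  simp only [ev, gl, LinearMap.coe_mk, AddHom.coe_mk] at this
  rw [← this, Finset.sum_range]
  simp

/-- coefficients of `x^{p^l}` in `f(x,y)` -/
def fl {A : Type*} [CommRing A] (p e : ℕ) (a : ℕ → A) (l : ℕ) (y : A) : A :=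
  -((∑ i ∈ Finset.range (l + 1), (a i * y) ^ p ^ (l - i)) + Rgen p e a y ^ p ^ l)

lemma f_eq_fl {A : Type*} [CommRing A] {p e : ℕ} {a : ℕ → A} (x y : A) :
    fgen p e a x y = ∑ l ∈ Finset.range e, fl p e a l y * x ^ p ^ l := by
  simp only [fgen, fl, neg_mul, Finset.sum_neg_distrib, add_mul, Finset.sum_add_distrib]
  congr 2
  · rw [← Finset.sum_range_diag_flip e (fun i j => (a i * x ^ p ^ i * y) ^ p ^ j)]
    refine Finset.sum_congr rfl fun l _ => ?_
    rw [Finset.sum_mul]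
    refine Finset.sum_congr rfl fun i hi => ?_
    have : p ^ l = p ^ i * p ^ (l - i) := by
      rw [← pow_add]; congr 1; rw [Finset.mem_range] at hi; omega
    rw [this, pow_mul, ← mul_pow]; ring
  · exact Finset.sum_congr rfl fun l _ => by ring

lemma fl_map {A B : Type*} [CommRing A] [CommRing B] {p e : ℕ} {a : ℕ → A} (φ : A →+* B) (l : ℕ)
    (y : A) : φ (fl p e a l y) = fl p e (fun i => φ (a i)) l (φ y) := by
  simp [fl, R_map]

lemma fl_add {A : Type*} [CommRing A] {p e : ℕ} {a : ℕ → A} (h : FrobP p A) (l : ℕ) (x y : A) :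
    fl p e a l (x + y) = fl p e a l x + fl p e a l y := by
  simp only [fl, R_add h, mul_add, h.add, Finset.sum_add_distrib]; ring

lemma fl_smul {A : Type*} [CommRing A] {p e : ℕ} {a : ℕ → A} {c : A} (hc : c ^ p = c) (l : ℕ)
    (x : A) : fl p e a l (c * x) = c * fl p e a l x := by
  simp only [fl, R_smul hc, mul_pow, fixed_pow hc, mul_neg, mul_add, Finset.mul_sum]
  congr 2
  exact Finset.sum_congr rfl fun i _ => by ring

end interp

section oddstruct
open scoped Classical

lemma biadd_eq {k : Type*} [Field k] {p e : ℕ} (h : FrobP p k) (a : ℕ → k) (φ : ℕ → ℕ → k)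
    (x y : k) :
    ∑ i ∈ Finset.range (e + 1), ∑ j ∈ Finset.range (e + 1),
      ((if i = 0 then a j else 0) + (if j = 0 then a i else 0)
        - (if 0 < i ∧ 0 < j then φ (i - 1) (j - 1) ^ p else 0)
        + (if i < e ∧ j < e then φ i j else 0)) * x ^ p ^ i * y ^ p ^ j =
    x * Rgen p e a y + y * Rgen p e a x
      - (∑ i ∈ Finset.range e, ∑ j ∈ Finset.range e, φ i j * x ^ p ^ i * y ^ p ^ j) ^ p
      + ∑ i ∈ Finset.range e, ∑ j ∈ Finset.range e, φ i j * x ^ p ^ i * y ^ p ^ j := by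
  simp only [add_mul, sub_mul, Finset.sum_add_distrib, Finset.sum_sub_distrib]
  have t1 : ∑ i ∈ Finset.range (e + 1), ∑ j ∈ Finset.range (e + 1),
      (if i = 0 then a j else 0) * x ^ p ^ i * y ^ p ^ j = x * Rgen p e a y := by
    rw [Finset.sum_eq_single 0]
    · simp only [if_true, pow_zero, pow_one, Rgen, Finset.mul_sum]
      exact Finset.sum_congr rfl fun j _ => by ring
    · intro b _ hb; simp [hb]
    · simp
  have t2 : ∑ i ∈ Finset.range (e + 1), ∑ j ∈ Finset.range (e + 1),
      (if j = 0 then a i else 0) * x ^ p ^ i * y ^ p ^ j = y * Rgen p e a x := by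
    rw [Rgen, Finset.mul_sum]
    refine Finset.sum_congr rfl fun i _ => ?_
    rw [Finset.sum_eq_single 0]
    · simp; ring
    · intro b _ hb; simp [hb]
    · simp
  have t3 : ∑ i ∈ Finset.range (e + 1), ∑ j ∈ Finset.range (e + 1),
      (if 0 < i ∧ 0 < j then φ (i - 1) (j - 1) ^ p else 0) * x ^ p ^ i * y ^ p ^ j =
      (∑ i ∈ Finset.range e, ∑ j ∈ Finset.range e, φ i j * x ^ p ^ i * y ^ p ^ j) ^ p := by
    rw [Finset.sum_range_succ']
    simp only [Finset.sum_range_succ' _ e, lt_irrefl, and_false, false_and, if_false, zero_mul,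
      Finset.sum_const_zero, add_zero]
    rw [h.sum1]
    refine Finset.sum_congr rfl fun i _ => ?_
    rw [h.sum1]
    refine Finset.sum_congr rfl fun j _ => ?_
    rw [if_pos ⟨by omega, by omega⟩, Nat.add_sub_cancel, Nat.add_sub_cancel, mul_pow, mul_pow,
      ← pow_mul, ← pow_mul, ← pow_succ, ← pow_succ]
  have t4 : ∑ i ∈ Finset.range (e + 1), ∑ j ∈ Finset.range (e + 1),
      (if i < e ∧ j < e then φ i j else 0) * x ^ p ^ i * y ^ p ^ j =
      ∑ i ∈ Finset.range e, ∑ j ∈ Finset.range e, φ i j * x ^ p ^ i * y ^ p ^ j := by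
    rw [Finset.sum_range_succ]
    simp only [Finset.sum_range_succ _ e, lt_irrefl, and_false, false_and, if_false, zero_mul,
      Finset.sum_const_zero, add_zero]
    refine Finset.sum_congr rfl fun i hi => Finset.sum_congr rfl fun j hj => ?_
    rw [if_pos ⟨Finset.mem_range.mp hi, Finset.mem_range.mp hj⟩]
  rw [t1, t2, t3, t4]

lemma odd_structure {F k : Type*} [Field F] [Fintype F] [Field k] [Fintype k] (ι : F →+* k)
    {p e s : ℕ} (h : FrobP p F) (h' : FrobP p k) (hp : 2 ≤ p)
    (hpF : (p : F) = 0) (hs : s ≠ 0) (hF : Fintype.card F = p ^ s)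
    (hkc : p ^ (e + 1) ≤ Fintype.card k) (a : ℕ → F)
    (A : Finset F) (hA0 : 0 ∈ A) (hAadd : ∀ x ∈ A, ∀ y ∈ A, x + y ∈ A)
    (hAsmul : ∀ c : F, c ^ p = c → ∀ x ∈ A, c * x ∈ A) (hAc : A.card = p ^ e)
    (hE : ∀ x ∈ A, Egen p e a x = 0)
    (hsym : ∀ x ∈ A, ∀ y ∈ A, fgen p e a x y = fgen p e a y x) :
    ∃ (γ : F) (Fc : ℕ → F) (Φ : k → k → k), Fc e = 1 ∧ (∀ x ∈ A, Rgen p e Fc x = 0) ∧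
      ∀ x y : k, x * Rgen p e (fun i => ι (a i)) y + y * Rgen p e (fun i => ι (a i)) x =
        ι γ * Rgen p e (fun i => ι (Fc i)) x * Rgen p e (fun i => ι (Fc i)) y +
          (Φ x y ^ p - Φ x y) := by
  have I1 := fun l => interp h hp hpF hs hF A hA0 hAadd hAsmul hAc (fl p e a l)
    (fl_add h l) (fun c hc x => fl_smul hc l x)
  choose φ hφ using I1
  obtain ⟨F0, hF0⟩ := interp h hp hpF hs hF A hA0 hAadd hAsmul hAc (fun x => x ^ p ^ e)
    (fun x y => h.add e x y) (fun c hc x => by simp only [mul_pow, fixed_pow hc])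
  set Fc : ℕ → F := fun j => if j = e then 1 else - F0 j with hFc
  have hFce : Fc e = 1 := by simp [hFc]
  have hFA : ∀ x ∈ A, Rgen p e Fc x = 0 := by
    intro x hx
    rw [Rgen, Finset.sum_range_succ, hFce, one_mul, hF0 x hx, ← Finset.sum_add_distrib]
    refine Finset.sum_eq_zero fun j hj => ?_
    have : j ≠ e := by rw [Finset.mem_range] at hj; omega
    simp [hFc, this]
  -- symmetry
  have hφs : ∀ i < e, ∀ j < e, φ i j = φ j i := by
    have h1 : ∀ x ∈ A, ∀ y ∈ A, ∑ i ∈ Finset.range e,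
        (∑ j ∈ Finset.range e, (φ i j - φ j i) * x ^ p ^ j) * y ^ p ^ i = 0 := by
      intro x hx y hy
      have h2 := hsym y hy x hx
      rw [f_eq_fl, f_eq_fl] at h2
      simp only [hφ _ x hx, hφ _ y hy] at h2
      simp only [sub_mul, Finset.sum_sub_distrib]
      rw [h2, sub_eq_zero]
      simp only [Finset.sum_mul]
      rw [Finset.sum_comm]
      refine Finset.sum_congr rfl fun i _ => Finset.sum_congr rfl fun j _ => by ring
    intro i hi j hj
    have h3 : ∀ x ∈ A, ∑ j ∈ Finset.range e, (φ i j - φ j i) * x ^ p ^ j = 0 := fun x hx =>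
      addpoly_zero hp e (fun i => ∑ j ∈ Finset.range e, (φ i j - φ j i) * x ^ p ^ j) A hAc.ge
        (h1 x hx) i hi
    exact sub_eq_zero.mp (addpoly_zero hp e _ A hAc.ge h3 j hj)
  set β : ℕ → ℕ → F := fun i j => (if i = 0 then a j else 0) + (if j = 0 then a i else 0)
        - (if 0 < i ∧ 0 < j then φ (i - 1) (j - 1) ^ p else 0)
        + (if i < e ∧ j < e then φ i j else 0) with hβ
  set Φ : k → k → k := fun x y => ∑ i ∈ Finset.range e, ∑ j ∈ Finset.range e,
    ι (φ i j) * x ^ p ^ i * y ^ p ^ j with hΦ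
  have hB : ∀ x y : k, ∑ i ∈ Finset.range (e + 1), ∑ j ∈ Finset.range (e + 1),
      ι (β i j) * x ^ p ^ i * y ^ p ^ j = x * Rgen p e (fun i => ι (a i)) y
        + y * Rgen p e (fun i => ι (a i)) x - Φ x y ^ p + Φ x y := by
    intro x y
    rw [hΦ, ← biadd_eq h' (fun i => ι (a i)) (fun i j => ι (φ i j)) x y]
    refine Finset.sum_congr rfl fun i _ => Finset.sum_congr rfl fun j _ => ?_
    simp only [hβ, map_add, map_sub, apply_ite ι, map_zero, map_pow]
  have hβs : ∀ i ≤ e, ∀ j ≤ e, β i j = β j i := by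
    intro i hi j hj
    simp only [hβ]
    have e1 : (if 0 < i ∧ 0 < j then φ (i - 1) (j - 1) ^ p else 0) =
        (if 0 < j ∧ 0 < i then φ (j - 1) (i - 1) ^ p else 0) := by
      by_cases hc : 0 < i ∧ 0 < j
      · rw [if_pos hc, if_pos hc.symm, hφs _ (by omega) _ (by omega)]
      · rw [if_neg hc, if_neg (fun hh => hc hh.symm)]
    have e2 : (if i < e ∧ j < e then φ i j else 0) = (if j < e ∧ i < e then φ j i else 0) := by
      by_cases hc : i < e ∧ j < e
      · rw [if_pos hc, if_pos hc.symm, hφs _ hc.1 _ hc.2]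
      · rw [if_neg hc, if_neg (fun hh => hc hh.symm)]
    rw [e1, e2]; ring
  have hfι : ∀ (x : k), ∀ y ∈ A, fgen p e (fun i => ι (a i)) x (ι y) = Φ x (ι y) := by
    intro x y hy
    rw [f_eq_fl, hΦ]
    refine Finset.sum_congr rfl fun i _ => ?_
    rw [← fl_map ι, hφ i y hy, map_sum, Finset.sum_mul]
    refine Finset.sum_congr rfl fun j _ => ?_
    simp only [map_mul, map_pow]; ring
  have hvan : ∀ i ≤ e, ∀ y ∈ A, ∑ j ∈ Finset.range (e + 1), β i j * y ^ p ^ j = 0 := by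
    intro i hi y hy
    have h1 : ∀ x ∈ (Finset.univ : Finset k), ∑ i ∈ Finset.range (e + 1),
        (ι (∑ j ∈ Finset.range (e + 1), β i j * y ^ p ^ j)) * x ^ p ^ i = 0 := by
      intro x _
      have h2 := hB x (ι y)
      have h3 := f_wp (e := e) (a := fun i => ι (a i)) h' x (ι y)
      rw [hfι x y hy, ← E_map ι, hE y hy, map_zero, mul_zero, sub_zero] at h3
      rw [← h3] at h2
      rw [show Φ x (ι y) ^ p - Φ x (ι y) - Φ x (ι y) ^ p + Φ x (ι y) = 0 by ring] at h2
      rw [← h2]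
      refine Finset.sum_congr rfl fun i _ => ?_
      rw [map_sum, Finset.sum_mul]
      refine Finset.sum_congr rfl fun j _ => ?_
      simp only [map_mul, map_pow]; ring
    have h4 := addpoly_zero hp (e + 1) _ Finset.univ (by rw [Finset.card_univ]; exact hkc) h1 i
      (by omega)
    exact (map_eq_zero ι).mp h4
  have hβF : ∀ i ≤ e, ∀ j ≤ e, β i j = β i e * Fc j := by
    intro i hi j hj
    rcases Nat.lt_or_eq_of_le hj with hj' | hj'
    · have h1 : ∀ y ∈ A, ∑ j ∈ Finset.range e, (β i j - β i e * Fc j) * y ^ p ^ j = 0 := by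
        intro y hy
        have h2 := hvan i hi y hy
        have h3 := hFA y hy
        rw [Rgen] at h3
        rw [Finset.sum_range_succ] at h2 h3
        simp only [sub_mul, Finset.sum_sub_distrib, mul_assoc, ← Finset.mul_sum]
        rw [hFce] at h3
        linear_combination h2 - β i e * h3
      exact sub_eq_zero.mp (addpoly_zero hp e _ A hAc.ge h1 j hj')
    · subst hj'; rw [hFce, mul_one]
  have hβγ : ∀ i ≤ e, ∀ j ≤ e, β i j = β e e * Fc i * Fc j := by
    intro i hi j hj
    rw [hβF i hi j hj, hβs i hi e le_rfl, hβF e le_rfl i hi]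
  refine ⟨β e e, Fc, Φ, hFce, hFA, fun x y => ?_⟩
  have h5 := hB x y
  have h6 : ∑ i ∈ Finset.range (e + 1), ∑ j ∈ Finset.range (e + 1),
      ι (β i j) * x ^ p ^ i * y ^ p ^ j = ι (β e e) * Rgen p e (fun i => ι (Fc i)) x
        * Rgen p e (fun i => ι (Fc i)) y := by
    rw [mul_assoc, Rgen, Rgen, Finset.sum_mul_sum, Finset.mul_sum]
    refine Finset.sum_congr rfl fun i hi => ?_
    rw [Finset.mul_sum]
    refine Finset.sum_congr rfl fun j hj => ?_
    rw [Finset.mem_range] at hi hj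
    rw [hβγ i (by omega) j (by omega)]
    simp only [map_mul]; ring
  linear_combination h6 - h5

end oddstruct

section oddsum
open scoped Classical

lemma roots_R_le {K : Type*} [Field K] [Fintype K] {p e : ℕ} {α : ℕ → K} (hp : 2 ≤ p)
    (hα : α e ≠ 0) : (Finset.univ.filter fun x : K => Rgen p e α x = 0).card ≤ p ^ e := by
  set P : K[X] := Rgen p e (fun i => C (α i)) X with hP
  have hd := natDegree_R hp hα
  have hP0 : P ≠ 0 := by
    intro h0
    rw [← hP, h0, natDegree_zero] at hd
    have : 0 < p ^ e := by positivity
    omega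
  rw [← hd]
  refine le_trans (Finset.card_le_card ?_) ((Multiset.toFinset_card_le _).trans P.card_roots')
  intro x hx
  rw [Multiset.mem_toFinset, mem_roots hP0, IsRoot.def]
  have := R_map (p := p) (e := e) (a := fun i => (C (α i) : K[X])) (evalRingHom x) X
  simp only [coe_evalRingHom, eval_C, eval_X] at this
  rw [hP, this]
  simpa using hx

lemma roots_E_le {K : Type*} [Field K] [Fintype K] {p e : ℕ} {α : ℕ → K} (hp : 2 ≤ p)
    (hα : α e ≠ 0) (hne : e = 0 → (2 : K) ≠ 0) :
    (Finset.univ.filter fun x : K => Egen p e α x = 0).card ≤ p ^ (2 * e) := by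
  set P : K[X] := Egen p e (fun i => C (α i)) X with hP
  have hd := natDegree_E hp hα hne
  have hP0 : P ≠ 0 := by
    intro h0
    rw [← hP, h0, natDegree_zero] at hd
    have : 0 < p ^ (2 * e) := by positivity
    omega
  rw [← hd]
  refine le_trans (Finset.card_le_card ?_) ((Multiset.toFinset_card_le _).trans P.card_roots')
  intro x hx
  rw [Multiset.mem_toFinset, mem_roots hP0, IsRoot.def, hP, eval_E]
  simpa using hx

lemma sum_addhom {G H : Type*} [AddCommGroup G] [Fintype G] [AddCommGroup H] (T : G →+ H)
    (g : H → ℂ) : ∑ x, g (T x) = ((Finset.univ.filter fun x => T x = 0).card : ℂ) *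
      ∑ u ∈ Finset.univ.image T, g u := by
  rw [← Finset.sum_fiberwise_of_maps_to (s := Finset.univ) (t := Finset.univ.image T)
    (g := T) (fun x _ => Finset.mem_image_of_mem _ (Finset.mem_univ _)), Finset.mul_sum]
  refine Finset.sum_congr rfl fun u hu => ?_
  have h1 : (Finset.univ.filter fun x => T x = u).card =
      (Finset.univ.filter fun x => T x = 0).card := by
    refine AddMonoidHom.card_fiber_eq_of_mem_range T ?_ ⟨0, map_zero T⟩
    simpa using hu
  rw [← h1, ← nsmul_eq_mul, ← Finset.sum_const]
  refine Finset.sum_congr rfl fun x hx => ?_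
  rw [(Finset.mem_filter.mp hx).2]

lemma card_addhom {G H : Type*} [AddCommGroup G] [Fintype G] [AddCommGroup H] (T : G →+ H) :
    Fintype.card G = (Finset.univ.filter fun x => T x = 0).card *
      (Finset.univ.image T).card := by
  have := sum_addhom T (fun _ => 1)
  simp only [Finset.sum_const, nsmul_eq_mul, mul_one, Finset.card_univ] at this
  exact_mod_cast this

variable {k : Type*} [Field k] [Fintype k]

/-- trace down to the `q`-element field -/
def Trq (q M : ℕ) (z : k) : k := Rgen q M (fun _ => 1) z

lemma Trq_fixed {q M : ℕ} (h : FrobP q k) (hk : Fintype.card k = q ^ (M + 1)) (z : k) :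
    Trq q M z ^ q = Trq q M z := by
  have := telescope h (M + 1) z
  rw [← hk, FiniteField.pow_card, sub_self, sub_eq_zero] at this
  simpa [Trq, Rgen] using this

lemma Trq_smul {q M : ℕ} {c : k} (hc : c ^ q = c) (z : k) :
    Trq q M (c * z) = c * Trq q M z := R_smul hc z

lemma Trq_ker {q M : ℕ} (hq : 2 ≤ q) :
    (Finset.univ.filter fun x : k => Trq q M x = 0).card ≤ q ^ M :=
  roots_R_le hq (by simp)

lemma Trq_ne {q M : ℕ} (hq : 2 ≤ q) (hk : Fintype.card k = q ^ (M + 1)) :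
    ∃ z : k, Trq q M z ≠ 0 := by
  by_contra hcon
  push Not at hcon
  have h1 := Trq_ker (k := k) (M := M) hq
  rw [Finset.filter_true_of_mem (fun x _ => hcon x), Finset.card_univ, hk] at h1
  exact absurd h1 (not_le.mpr (Nat.pow_lt_pow_right (by omega) (by omega)))

lemma hilbert90 {q M : ℕ} (h : FrobP q k) (hq : 2 ≤ q) (hqk : (q : k) = 0)
    (hk : Fintype.card k = q ^ (M + 1)) (z : k) (hz : Trq q M z = 0) : ∃ w, w ^ q - w = z := by
  let T : k →+ k :=
    { toFun := fun w => w ^ q - w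
      map_zero' := by simp; omega
      map_add' := fun x y => by rw [h.add1]; ring }
  have h1 := card_addhom T
  have h2 : (Finset.univ.filter fun x => T x = 0).card = q := by
    rw [← card_fixed hq hqk (Nat.succ_ne_zero M) hk]
    congr 1; ext x; simp [T, sub_eq_zero]
  rw [h2, hk, pow_succ, mul_comm] at h1
  have h3 : (Finset.univ.image T).card = q ^ M := (Nat.eq_of_mul_eq_mul_left (by omega) h1).symm
  have h4 : Finset.univ.image T ⊆ Finset.univ.filter fun x : k => Trq q M x = 0 := by
    intro x hx
    obtain ⟨w, -, rfl⟩ := Finset.mem_image.mp hx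
    simp only [Finset.mem_filter, Finset.mem_univ, true_and]
    change Trq q M (w ^ q - w) = 0
    have h5 := Trq_fixed h hk w
    rw [Trq] at h5
    have h6 : Rgen q M (fun _ => (1 : k)) w ^ q = Rgen q M (fun _ => (1 : k)) (w ^ q) := by
      have := R_frob (e := M) (a := fun _ => (1 : k)) h 1 (by simp) w
      simpa using this
    rw [Trq, sub_eq_add_neg, R_add h, R_neg h, ← h6, h5]; ring
  have h7 := Finset.eq_of_subset_of_card_le h4 (by rw [h3]; exact Trq_ker hq)
  have h8 : z ∈ Finset.univ.image T := by rw [h7]; simpa using hz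
  obtain ⟨w, -, hw⟩ := Finset.mem_image.mp h8
  exact ⟨w, hw⟩

/-- Detecting trace zero via characters. -/
lemma char_Tr_ne {q M : ℕ} (h : FrobP q k) (hq : 2 ≤ q) (hqk : (q : k) = 0)
    (hk : Fintype.card k = q ^ (M + 1)) {Ψ : AddChar k ℂ} (hΨ : Ψ ∈ Xs k q) (hΨ1 : Ψ ≠ 1)
    (u : k) (hu : Trq q M u ≠ 0) : ∃ m : k, m ^ q = m ∧ Ψ (m * u) ≠ 1 := by
  by_contra hcon
  push Not at hcon
  apply hΨ1
  ext z
  rw [AddChar.one_apply]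
  set m := Trq q M z / Trq q M u with hm
  have hmf : m ^ q = m := by rw [hm, div_pow, Trq_fixed h hk, Trq_fixed h hk]
  have h0 : Trq q M (z - m * u) = 0 := by
    rw [sub_eq_add_neg, Trq, R_add h, R_neg h]
    change Trq q M z + - Trq q M (m * u) = 0
    rw [Trq_smul hmf, hm, div_mul_cancel₀ _ hu]; ring
  obtain ⟨w, hw⟩ := hilbert90 h hq hqk hk _ h0
  have h1 : Ψ (z - m * u) = 1 := by rw [← hw]; exact Xs_wp hΨ w
  have : z = (z - m * u) + m * u := by ring
  rw [this, AddChar.map_add_eq_mul, h1, hcon m hmf, mul_one]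

lemma char_Tr_zero {q M : ℕ} (h : FrobP q k) (hq : 2 ≤ q) (hqk : (q : k) = 0)
    (hk : Fintype.card k = q ^ (M + 1)) {Ψ : AddChar k ℂ} (hΨ : Ψ ∈ Xs k q)
    (u : k) (hu : Trq q M u = 0) : Ψ u = 1 := by
  obtain ⟨w, hw⟩ := hilbert90 h hq hqk hk _ hu
  rw [← hw]; exact Xs_wp hΨ w

lemma Trq_of_fixed {q M : ℕ} (hM : ((M + 1 : ℕ) : k) = 0) {m : k} (hm : m ^ q = m) :
    Trq q M m = 0 := by
  simp only [Trq, Rgen, one_mul, fixed_pow hm, Finset.sum_const, Finset.card_range, nsmul_eq_mul,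
    hM, zero_mul]

/-- Averaging over translations by the `q`-element field. -/
lemma quad_average {q M : ℕ} (h : FrobP q k) (hq : 2 ≤ q) (hqk : (q : k) = 0)
    (hk : Fintype.card k = q ^ (M + 1)) (hM : ((M + 1 : ℕ) : k) = 0) (h2 : (2 : k) ≠ 0)
    {Ψ : AddChar k ℂ} (hΨ : Ψ ∈ Xs k q)
    (hΨ1 : Ψ ≠ 1) (c : k) (hc : c ^ q = c) (hc0 : c ≠ 0) (I : Finset k)
    (hI : ∀ u ∈ I, ∀ l : k, l ^ q = l → u + l ∈ I)
    (hI0 : ∀ u, Trq q M u = 0 → u ∈ I) :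
    ∑ u ∈ I, Ψ (c * u ^ 2) = ∑ u ∈ Finset.univ.filter (fun u : k => Trq q M u = 0),
      Ψ (c * u ^ 2) := by
  set L := Finset.univ.filter (fun l : k => l ^ q = l) with hL
  have hLc : L.card = q := card_fixed hq hqk (Nat.succ_ne_zero M) hk
  have hq0 : (q : ℂ) ≠ 0 := by exact_mod_cast (by omega : q ≠ 0)
  have h22 : (2 : k) ^ q = 2 := by
    obtain ⟨φ, hφ⟩ := h 1
    have := hφ 2
    rw [pow_one, map_ofNat] at this
    exact this.symm
  have hneg : ∀ l : k, l ^ q = l → (-l) ^ q = -l := fun l hl => by rw [h.neg1, hl]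
  have hrow : ∀ u : k, ∑ l ∈ L, Ψ (2 * c * l * u) = if Trq q M u = 0 then (q : ℂ) else 0 := by
    intro u
    split_ifs with hu
    · have : ∀ l ∈ L, Ψ (2 * c * l * u) = 1 := by
        intro l hl
        have hl' : l ^ q = l := (Finset.mem_filter.mp hl).2
        refine char_Tr_zero h hq hqk hk hΨ _ ?_
        rw [Trq_smul (by rw [mul_pow, mul_pow, h22, hc, hl']), hu, mul_zero]
      rw [Finset.sum_congr rfl this, Finset.sum_const, hLc]; simp
    · obtain ⟨m, hm, hm1⟩ := char_Tr_ne h hq hqk hk hΨ hΨ1 u hu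
      have hmf : (m / (2 * c)) ^ q = m / (2 * c) := by rw [div_pow, mul_pow, h22, hc, hm]
      refine sum_zero_of_translate L (m / (2 * c)) ?_ _ (Ψ (m * u)) hm1 ?_
      · intro x
        simp only [hL, Finset.mem_filter, Finset.mem_univ, true_and]
        rw [h.add1, hmf, add_left_inj]
      · intro x _
        rw [← AddChar.map_add_eq_mul]
        congr 1
        field_simp
        ring
  have key : (q : ℂ) * ∑ u ∈ I, Ψ (c * u ^ 2) = (q : ℂ) *
      ∑ u ∈ Finset.univ.filter (fun u : k => Trq q M u = 0), Ψ (c * u ^ 2) := by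
    calc (q : ℂ) * ∑ u ∈ I, Ψ (c * u ^ 2) = ∑ l ∈ L, ∑ u ∈ I, Ψ (c * (u + l) ^ 2) := by
          rw [← hLc, ← nsmul_eq_mul, ← Finset.sum_const]
          refine Finset.sum_congr rfl fun l hl => ?_
          have hl' : l ^ q = l := (Finset.mem_filter.mp hl).2
          symm
          refine Finset.sum_equiv (Equiv.addRight l) (fun u => ?_) (fun _ _ => rfl)
          simp only [Equiv.coe_addRight]
          refine ⟨fun hu => hI u hu l hl', fun hu => ?_⟩
          have := hI _ hu (-l) (hneg l hl')
          simpa using this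
      _ = ∑ u ∈ I, Ψ (c * u ^ 2) * ∑ l ∈ L, Ψ (2 * c * l * u) := by
          rw [Finset.sum_comm]
          refine Finset.sum_congr rfl fun u _ => ?_
          rw [Finset.mul_sum]
          refine Finset.sum_congr rfl fun l hl => ?_
          have hl' : l ^ q = l := (Finset.mem_filter.mp hl).2
          have h1 : Ψ (c * l ^ 2) = 1 := by
            refine char_Tr_zero h hq hqk hk hΨ _ (Trq_of_fixed hM ?_)
            rw [mul_pow, ← pow_mul, mul_comm 2 q, pow_mul, hl', hc]
          rw [show c * (u + l) ^ 2 = c * u ^ 2 + 2 * c * l * u + c * l ^ 2 by ring,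
            AddChar.map_add_eq_mul, AddChar.map_add_eq_mul, h1, mul_one]
      _ = _ := by
          simp only [hrow, mul_ite, mul_zero]
          rw [← Finset.sum_filter, Finset.mul_sum]
          refine Finset.sum_congr ?_ fun u _ => by ring
          ext u
          simp only [Finset.mem_filter, Finset.mem_univ, true_and, and_iff_right_iff_imp]
          exact hI0 u
  exact mul_left_cancel₀ hq0 key

end oddsum

section oddmain
open scoped Classical

lemma odd_main {F k : Type*} [Field F] [Fintype F] [Field k] [Fintype k] (ι : F →+* k)
    {p e s q M r : ℕ} (h : FrobP p F) (h' : FrobP p k) (hp : 2 ≤ p)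
    (hpF : (p : F) = 0) (hpk : (p : k) = 0) (hs : s ≠ 0) (hq : q = p ^ s)
    (hF : Fintype.card F = q) (hk : Fintype.card k = q ^ (M + 1)) (hMr : M + 1 = 2 * r)
    (hr4 : q ^ r % 4 = 1) (hM : ((M + 1 : ℕ) : k) = 0) (h2 : (2 : k) ≠ 0)
    (hkc : p ^ (e + 1) ≤ Fintype.card k) (a : ℕ → F)
    (A : Finset F) (hA0 : 0 ∈ A) (hAadd : ∀ x ∈ A, ∀ y ∈ A, x + y ∈ A)
    (hAsmul : ∀ c : F, c ^ p = c → ∀ x ∈ A, c * x ∈ A) (hAc : A.card = p ^ e)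
    (hE : ∀ x ∈ A, Egen p e a x = 0)
    (hsym : ∀ x ∈ A, ∀ y ∈ A, fgen p e a x y = fgen p e a y x)
    (hEne : ∃ y : k, Egen p e (fun i => ι (a i)) y ≠ 0)
    (Ψ : AddChar k ℂ) (hΨ : Ψ ∈ Xs k p) (hΨ1 : Ψ ≠ 1) :
    ∑ x : k, Ψ (x * Rgen p e (fun i => ι (a i)) x) = - ((p : ℂ) ^ e * (q : ℂ) ^ r) := by
  obtain ⟨γ, Fc, Φ, hFce, hFA, hst⟩ := odd_structure ι h h' hp hpF hs (hF.trans hq) hkc a A hA0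
    hAadd hAsmul hAc hE hsym
  have hq2 : 2 ≤ q := by rw [hq]; exact hp.trans (Nat.le_self_pow hs p)
  have h'q : FrobP q k := by
    intro i
    obtain ⟨φ, hφ⟩ := h' (s * i)
    exact ⟨φ, fun x => by rw [hφ, hq, pow_mul]⟩
  have hqk : (q : k) = 0 := by rw [hq, Nat.cast_pow, hpk, zero_pow hs]
  have hΨq : Ψ ∈ Xs k q := mem_Xs.mpr fun z => by rw [hq]; exact Xs_pow hΨ s z
  have hιq : ∀ x : F, ι x ^ q = ι x := fun x => by
    rw [← map_pow, ← hF, FiniteField.pow_card]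
  have h22p : (2 : k) ^ p = 2 := by
    obtain ⟨φ, hφ⟩ := h' 1
    have := hφ 2
    rw [pow_one, map_ofNat] at this
    exact this.symm
  have h22 : (2 : k) ^ q = 2 := by rw [hq]; exact fixed_pow h22p s
  -- γ ≠ 0
  have hγ : γ ≠ 0 := by
    rintro rfl
    obtain ⟨y, hy⟩ := hEne
    apply hΨ1
    ext z
    rw [AddChar.one_apply]
    obtain ⟨φ, hφ⟩ := h' e
    obtain ⟨x, hx⟩ := (Finite.injective_iff_surjective.mp φ.injective)
      (z / Egen p e (fun i => ι (a i)) y)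
    rw [hφ] at hx
    have h3 := f_wp (e := e) (a := fun i => ι (a i)) h' x y
    rw [hst x y, map_zero, hx, div_mul_cancel₀ _ hy] at h3
    have h4 : z = (Φ x y ^ p - Φ x y) -
        (fgen p e (fun i => ι (a i)) x y ^ p - fgen p e (fun i => ι (a i)) x y) := by
      linear_combination h3
    rw [h4, AddChar.map_sub_eq_div, Xs_wp hΨ, Xs_wp hΨ, div_one]
  set c : k := ι γ / 2 with hc
  have hcq : c ^ q = c := by rw [hc, div_pow, hιq, h22]
  have hc0 : c ≠ 0 := div_ne_zero ((map_ne_zero ι).mpr hγ) h2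
  let FA : k →+ k :=
    { toFun := Rgen p e (fun i => ι (Fc i))
      map_zero' := R_zero h'
      map_add' := R_add h' }
  let FA0 : F →+ F :=
    { toFun := Rgen p e Fc
      map_zero' := R_zero h
      map_add' := R_add h }
  have step1 : ∀ x : k, Ψ (x * Rgen p e (fun i => ι (a i)) x) = Ψ (c * FA x ^ 2) := by
    intro x
    have h5 := hst x x
    have h6 : x * Rgen p e (fun i => ι (a i)) x =
        c * FA x ^ 2 + ((Φ x x / 2) ^ p - Φ x x / 2) := by
      change _ = c * (Rgen p e (fun i => ι (Fc i)) x) ^ 2 + _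
      rw [div_pow, h22p, hc]
      field_simp
      linear_combination h5
    rw [h6, AddChar.map_add_eq_mul, Xs_wp hΨ, mul_one]
  -- kernels
  have hker0 : (Finset.univ.filter fun x => FA0 x = 0).card = p ^ e := by
    refine le_antisymm (roots_R_le hp (by rw [hFce]; exact one_ne_zero)) ?_
    rw [← hAc]
    refine Finset.card_le_card fun x hx => ?_
    simp only [Finset.mem_filter, Finset.mem_univ, true_and]
    exact hFA x hx
  have hker : (Finset.univ.filter fun x => FA x = 0).card = p ^ e := by
    refine le_antisymm (roots_R_le hp (by simp only [hFce, map_one]; exact one_ne_zero)) ?_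
    rw [← hAc, ← Finset.card_image_of_injective A ι.injective]
    refine Finset.card_le_card fun x hx => ?_
    obtain ⟨y, hy, rfl⟩ := Finset.mem_image.mp hx
    simp only [Finset.mem_filter, Finset.mem_univ, true_and]
    change Rgen p e (fun i => ι (Fc i)) (ι y) = 0
    rw [← R_map ι, hFA y hy, map_zero]
  set I := Finset.univ.image FA with hI
  set J := Finset.univ.image FA0 with hJ
  have hIc := card_addhom FA
  have hJc := card_addhom FA0
  rw [hker, hk] at hIc
  rw [hker0, hF] at hJc
  -- fixed elements come from F
  have hfix : ∀ x : k, x ^ q = x → ∃ y : F, ι y = x := by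
    have h7 : (Finset.univ.image ι) = Finset.univ.filter fun x : k => x ^ q = x := by
      refine Finset.eq_of_subset_of_card_le ?_ ?_
      · intro x hx
        obtain ⟨y, -, rfl⟩ := Finset.mem_image.mp hx
        simp [hιq]
      · rw [card_fixed hq2 hqk (Nat.succ_ne_zero M) hk,
          Finset.card_image_of_injective _ ι.injective, Finset.card_univ, hF]
    intro x hx
    have : x ∈ Finset.univ.image ι := by rw [h7]; simpa using hx
    obtain ⟨y, -, hy⟩ := Finset.mem_image.mp this
    exact ⟨y, hy⟩
  let T : k →+ k :=
    { toFun := Trq q M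
      map_zero' := R_zero h'q
      map_add' := R_add h'q }
  set N := Finset.univ.filter fun u : k => T u ∈ J.image ι with hN
  have hFAT : ∀ x, T (FA x) = FA (T x) := by
    intro x
    change Rgen q M (fun _ => 1) (FA x) = FA (Rgen q M (fun _ => 1) x)
    simp only [Rgen, one_mul, map_sum]
    refine Finset.sum_congr rfl fun i _ => ?_
    change Rgen p e (fun i => ι (Fc i)) x ^ q ^ i = Rgen p e (fun i => ι (Fc i)) (x ^ q ^ i)
    rw [hq, ← pow_mul, R_frob h']
    intro j
    rw [pow_mul, ← hq]
    exact fixed_pow (hιq _) i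
  have hIN : I ⊆ N := by
    intro u hu
    obtain ⟨x, -, rfl⟩ := Finset.mem_image.mp hu
    simp only [hN, Finset.mem_filter, Finset.mem_univ, true_and]
    rw [hFAT]
    obtain ⟨y, hy⟩ := hfix (T x) (Trq_fixed h'q hk x)
    rw [← hy]
    refine Finset.mem_image.mpr ⟨FA0 y, Finset.mem_image_of_mem _ (Finset.mem_univ _), ?_⟩
    exact R_map ι y
  have hNc : N.card ≤ q ^ M * J.card := by
    rw [← Finset.card_image_of_injective J ι.injective]
    refine Finset.card_le_mul_card_image_of_maps_to (f := T) (fun u hu => (Finset.mem_filter.mp hu).2)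
      _ fun b hb => ?_
    refine le_trans ?_ (Trq_ker (k := k) (M := M) hq2)
    by_cases hbr : b ∈ Set.range T
    · have h8 := AddMonoidHom.card_fiber_eq_of_mem_range T hbr ⟨0, map_zero T⟩
      refine le_trans (Finset.card_le_card ?_) h8.le
      intro x hx
      simpa using (Finset.mem_filter.mp hx).2
    · rw [Finset.card_eq_zero.mpr]
      · exact Nat.zero_le _
      · refine Finset.filter_eq_empty_iff.mpr fun x _ hx => hbr ⟨x, hx⟩
  have hIeq : I = N := by
    refine Finset.eq_of_subset_of_card_le hIN ?_
    have hpe : 0 < p ^ e := by positivity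
    refine Nat.le_of_mul_le_mul_left ?_ hpe
    calc p ^ e * N.card ≤ p ^ e * (q ^ M * J.card) := Nat.mul_le_mul_left _ hNc
      _ = q ^ M * (p ^ e * J.card) := by ring
      _ = q ^ (M + 1) := by rw [← hJc, pow_succ]
      _ = _ := hIc
      _ ≤ _ := le_rfl
  have hIt : ∀ u ∈ I, ∀ l : k, l ^ q = l → u + l ∈ I := by
    intro u hu l hl
    rw [hIeq] at hu ⊢
    simp only [hN, Finset.mem_filter, Finset.mem_univ, true_and] at hu ⊢
    have : T l = 0 := Trq_of_fixed hM hl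
    rw [map_add, this, add_zero]
    exact hu
  have hI0 : ∀ u, Trq q M u = 0 → u ∈ I := by
    intro u hu
    rw [hIeq]
    simp only [hN, Finset.mem_filter, Finset.mem_univ, true_and]
    have : T u = 0 := hu
    rw [this]
    refine Finset.mem_image.mpr ⟨0, Finset.mem_image.mpr ⟨0, Finset.mem_univ _, map_zero _⟩,
      map_zero _⟩
  have q1 := quad_average h'q hq2 hqk hk hM h2 hΨq hΨ1 c hcq hc0 I hIt hI0
  have q2 := quad_average h'q hq2 hqk hk hM h2 hΨq hΨ1 c hcq hc0 Finset.univ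
    (fun _ _ _ _ => Finset.mem_univ _) (fun _ _ => Finset.mem_univ _)
  have hr0 : r ≠ 0 := by omega
  have hk2 : Fintype.card k = (q ^ r) ^ 2 := by rw [hk, hMr, ← pow_mul, mul_comm]
  have hQr : (q ^ r : ℕ) = p ^ (s * r) := by rw [hq, ← pow_mul]
  obtain ⟨bar, hbar⟩ := h' (s * r)
  have hbar' : ∀ x, bar x = x ^ (q ^ r) := fun x => by rw [hbar, hQr]
  have hQ2 : 2 ≤ q ^ r := hq2.trans (Nat.le_self_pow hr0 q)
  have g1 := gauss_sum bar hbar' hr4 hQ2 hk2 h2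
    (card_fixed hQ2 (by rw [Nat.cast_pow, hqk, zero_pow hr0]) two_ne_zero hk2)
    Ψ (fun z => by rw [hQr]; exact Xs_pow hΨ _ z) hΨ1 c (fixed_pow hcq r) hc0
  rw [Finset.sum_congr rfl fun x _ => step1 x, sum_addhom FA (fun u => Ψ (c * u ^ 2)), hker, q1,
    ← q2, g1]
  push_cast; ring

end oddmain

section even
open scoped Classical
variable {k : Type*} [Field k] [Fintype k] {p e : ℕ} {α : ℕ → k}

lemma card_fdiag (hp : 2 ≤ p) (he : 1 ≤ e) (hne : ∃ x : k, fgen p e α x x ≠ 0) :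
    (Finset.univ.filter fun x : k => fgen p e α x x = 0).card + 1 ≤
      p ^ (2 * e - 1) + p ^ (e - 1) := by
  set P : k[X] := fgen p e (fun i => C (α i)) X X with hP
  have hP0 : P ≠ 0 := by
    intro h0
    obtain ⟨x, hx⟩ := hne
    apply hx
    have := eval_f (p := p) (e := e) (α := α) X X x
    rw [← hP, h0] at this
    simpa using this.symm
  have hdeg : P.natDegree ≤ p ^ (2 * e - 1) + p ^ (e - 1) := by
    refine natDegree_f_le (dP := 1) (dQ := 1) (dR := p ^ e) natDegree_X_le natDegree_X_le
      (natDegree_R_le hp) _ ?_ ?_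
    · intro i hi j hj
      have h1 : p ^ j * (p ^ i * 1 + 1) = p ^ (i + j) + p ^ j := by rw [pow_add]; ring
      rw [h1]
      refine Nat.add_le_add (Nat.pow_le_pow_right (by omega) (by omega))
        (Nat.pow_le_pow_right (by omega) (by omega))
    · intro i hi
      have h1 : p ^ i * (1 + p ^ e) = p ^ (i + e) + p ^ i := by rw [pow_add]; ring
      rw [h1]
      refine Nat.add_le_add (Nat.pow_le_pow_right (by omega) (by omega))
        (Nat.pow_le_pow_right (by omega) (by omega))
  have hdvd : X ^ 2 ∣ P := by
    rw [hP, fgen, dvd_neg]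
    have hXn : ∀ n, (X : k[X]) ∣ X ^ p ^ n := fun n => dvd_pow_self _ (by positivity)
    have hXR : (X : k[X]) ∣ Rgen p e (fun i => C (α i)) X :=
      Finset.dvd_sum fun i _ => Dvd.dvd.mul_left (hXn i) _
    refine Finset.dvd_sum fun i _ => dvd_add (Finset.dvd_sum fun j _ => ?_) ?_
    · refine dvd_pow ?_ (by positivity)
      rw [sq]
      exact mul_dvd_mul (Dvd.dvd.mul_left (hXn i) _) dvd_rfl
    · refine dvd_pow ?_ (by positivity)
      rw [sq]
      exact mul_dvd_mul dvd_rfl hXR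
  obtain ⟨H, hH⟩ := hdvd
  have hH0 : H ≠ 0 := by rintro rfl; exact hP0 (by rw [hH, mul_zero])
  have hdH : P.natDegree = 2 + H.natDegree := by
    rw [hH, natDegree_mul (pow_ne_zero _ X_ne_zero) hH0, natDegree_X_pow]
  have hsub : (Finset.univ.filter fun x : k => fgen p e α x x = 0) ⊆
      insert 0 H.roots.toFinset := by
    intro x hx
    have hx' : fgen p e α x x = 0 := by simpa using hx
    have h1 := eval_f (p := p) (e := e) (α := α) X X x
    rw [← hP, hH, eval_X, hx', eval_mul, eval_pow, eval_X, mul_eq_zero] at h1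
    rw [Finset.mem_insert, Multiset.mem_toFinset, mem_roots hH0]
    rcases h1 with h1 | h1
    · left; exact pow_eq_zero_iff (two_ne_zero) |>.mp h1
    · right; exact h1
  have h2 := Finset.card_le_card hsub
  have h3 := Finset.card_insert_le (0 : k) H.roots.toFinset
  have h4 := (Multiset.toFinset_card_le H.roots).trans H.card_roots'
  omega

/-- polarisation of `x R(x)` -/
lemma xR_add (h : FrobP p k) {Ψ : AddChar k ℂ} (hΨ : Ψ ∈ Xs k p) (x u : k) :
    Ψ ((x + u) * Rgen p e α (x + u)) =
      Ψ (x * Rgen p e α x) * Ψ (u * Rgen p e α u) * Ψ (u ^ p ^ e * Egen p e α x) := by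
  have h1 := f_wp (e := e) (a := α) h u x
  have h2 : (x + u) * Rgen p e α (x + u) = x * Rgen p e α x + u * Rgen p e α u +
      u ^ p ^ e * Egen p e α x + (fgen p e α u x ^ p - fgen p e α u x) := by
    rw [R_add h, h1]; ring
  rw [h2, AddChar.map_add_eq_mul, AddChar.map_add_eq_mul, AddChar.map_add_eq_mul, Xs_wp hΨ, mul_one]

lemma frob_surj (h : FrobP p k) (i : ℕ) (z : k) : ∃ x, x ^ p ^ i = z := by
  obtain ⟨φ, hφ⟩ := h i
  obtain ⟨x, hx⟩ := (Finite.injective_iff_surjective.mp φ.injective) z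
  exact ⟨x, by rw [← hφ, hx]⟩

lemma char_two_sq (h2 : (2 : k) = 0) (Ψ : AddChar k ℂ) (z : k) : Ψ z * Ψ z = 1 := by
  rw [← AddChar.map_add_eq_mul, ← two_mul, h2, zero_mul, AddChar.map_zero_eq_one]

lemma sum_mul_char {Ψ : AddChar k ℂ} (hΨ1 : Ψ ≠ 1) (h : FrobP p k) (c : k) :
    ∑ x : k, Ψ (x ^ p ^ e * c) = if c = 0 then (Fintype.card k : ℂ) else 0 := by
  split_ifs with hc
  · simp [hc]
  · obtain ⟨z, hz⟩ : ∃ z, Ψ z ≠ 1 := by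
      by_contra hcon
      push Not at hcon
      exact hΨ1 (by ext z; simpa using hcon z)
    obtain ⟨x0, hx0⟩ := frob_surj h e (z / c)
    refine sum_zero_of_translate _ x0 (by simp) _ (Ψ z) hz ?_
    intro x _
    rw [h.add, hx0, add_mul, div_mul_cancel₀ _ hc, AddChar.map_add_eq_mul, mul_comm]

/-- the square of the sum -/
lemma sum_sq (h : FrobP p k) (h2 : (2 : k) = 0) {Ψ : AddChar k ℂ} (hΨ : Ψ ∈ Xs k p) (hΨ1 : Ψ ≠ 1)
    (hV1 : ∀ v, Egen p e α v = 0 → Ψ (v * Rgen p e α v) = 1) :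
    (∑ x : k, Ψ (x * Rgen p e α x)) ^ 2 =
      (Fintype.card k : ℂ) * (Finset.univ.filter fun v : k => Egen p e α v = 0).card := by
  rw [sq, Finset.sum_mul_sum]
  have h1 : ∀ x : k, ∑ y : k, Ψ (x * Rgen p e α x) * Ψ (y * Rgen p e α y) =
      ∑ u : k, Ψ (u * Rgen p e α u) * Ψ (x ^ p ^ e * Egen p e α u) := by
    intro x
    rw [← Equiv.sum_comp (Equiv.addRight x)]
    refine Finset.sum_congr rfl fun u _ => ?_
    simp only [Equiv.coe_addRight]
    rw [xR_add h hΨ]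
    linear_combination Ψ (u * Rgen p e α u) * Ψ (x ^ p ^ e * Egen p e α u) *
      char_two_sq h2 Ψ (x * Rgen p e α x)
  rw [Finset.sum_congr rfl fun x _ => h1 x, Finset.sum_comm]
  simp only [← Finset.mul_sum, sum_mul_char hΨ1 h, mul_ite, mul_zero]
  rw [← Finset.sum_filter]
  have h3 : ∀ v ∈ Finset.univ.filter (fun v : k => Egen p e α v = 0),
      Ψ (v * Rgen p e α v) * (Fintype.card k : ℂ) = Fintype.card k := by
    intro v hv
    rw [hV1 v (Finset.mem_filter.mp hv).2, one_mul]
  rw [Finset.sum_congr rfl h3, Finset.sum_const, nsmul_eq_mul, mul_comm]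

/-- all nontrivial invariant characters are multiplicative shifts of one of them -/
lemma Xs_shift (h : FrobP p k) (hp : 2 ≤ p) (hpk : (p : k) = 0) {m : ℕ} (hm : m ≠ 0)
    (hk : Fintype.card k = p ^ m) {Ψ : AddChar k ℂ} (hΨ : Ψ ∈ Xs k p) (hΨ1 : Ψ ≠ 1)
    (Ψ' : AddChar k ℂ) (hΨ' : Ψ' ∈ Xs k p) : ∃ c : k, c ^ p = c ∧ ∀ z, Ψ' z = Ψ (c * z) := by
  have h1 : (Finset.univ.filter fun y : k => y ^ p = y).image (fun c => Ψ.mulShift c) = Xs k p := by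
    refine Finset.eq_of_subset_of_card_le ?_ ?_
    · intro χ hχ
      obtain ⟨c, hc, rfl⟩ := Finset.mem_image.mp hχ
      have hc' : c ^ p = c := (Finset.mem_filter.mp hc).2
      rw [mem_Xs]
      intro z
      rw [AddChar.mulShift_apply, AddChar.mulShift_apply]
      nth_rewrite 1 [← hc']
      rw [← mul_pow, mem_Xs.mp hΨ]
    · rw [card_Xs h hp hpk hm hk, Finset.card_image_of_injOn, card_fixed hp hpk hm hk]
      intro c _ d _ hcd
      by_contra hne
      apply hΨ1
      ext z
      have h3 := DFunLike.congr_fun hcd (z / (c - d))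
      simp only [AddChar.mulShift_apply] at h3
      have hcd0 : c - d ≠ 0 := sub_ne_zero.mpr hne
      rw [AddChar.one_apply, show z = c * (z / (c - d)) - d * (z / (c - d)) by
        rw [← sub_mul, mul_div_cancel₀ _ hcd0], AddChar.map_sub_eq_div, h3,
        div_self (AddChar.val_isUnit _ _).ne_zero]
  rw [← h1] at hΨ'
  obtain ⟨c, hc, rfl⟩ := Finset.mem_image.mp hΨ'
  exact ⟨c, (Finset.mem_filter.mp hc).2, fun z => AddChar.mulShift_apply⟩

end even


section EvenCase

variable {k : Type*} [Field k] [Fintype k] {p e : ℕ} {α : ℕ → k}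

open Classical in
lemma even_t (h : FrobP p k) (hp : 2 ≤ p) (h2 : (2 : k) = 0) {s : ℕ} (hs : s ≠ 0)
    (hk : Fintype.card k = p ^ (8 * s)) :
    ∃ t t1 : k, t + t ^ p ^ (4 * s) = 1 ∧ t1 ^ p ^ (4 * s) = t1 ∧ t1 + t1 ^ p ^ (2 * s) = 1 := by
  have hq2 : 2 ≤ p ^ (2 * s) := le_trans hp (Nat.le_self_pow (by omega) p)
  have hk' : Fintype.card k = (p ^ (2 * s)) ^ (3 + 1) := by rw [hk, ← pow_mul]; congr 1; omega
  have hF : FrobP (p ^ (2 * s)) k := by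
    intro i
    obtain ⟨φ, hφ⟩ := h (2 * s * i)
    exact ⟨φ, fun x => by rw [hφ, ← pow_mul]⟩
  obtain ⟨z, hz⟩ := Trq_ne (k := k) hq2 hk'
  set c := Trq (p ^ (2 * s)) 3 z with hc
  have hcf : c ^ p ^ (2 * s) = c := Trq_fixed hF hk' z
  have hcf' : (c⁻¹) ^ p ^ (2 * s) = c⁻¹ := by rw [inv_pow, hcf]
  set τ := c⁻¹ * z with hτ
  have h1 : Trq (p ^ (2 * s)) 3 τ = 1 := by
    rw [hτ, Trq_smul hcf', ← hc, inv_mul_cancel₀ hz]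
  have h3 : τ + τ ^ p ^ (2 * s) + τ ^ p ^ (4 * s) + τ ^ p ^ (6 * s) = 1 := by
    rw [← h1]
    simp only [Trq, Rgen, Finset.sum_range_succ, Finset.sum_range_zero, ← pow_mul]
    ring_nf
  have h8 : τ ^ p ^ (8 * s) = τ := by rw [← hk, FiniteField.pow_card]
  have hxx : ∀ (x : k), x + x = 0 := fun x => by rw [← two_mul, h2, zero_mul]
  refine ⟨τ + τ ^ p ^ (2 * s), τ + τ ^ p ^ (4 * s), ?_, ?_, ?_⟩
  · rw [h.add, ← pow_mul, ← pow_add, ← h3]; ring_nf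
  · rw [h.add, ← pow_mul, ← pow_add, show 4 * s + 4 * s = 8 * s by ring, h8]; ring
  · rw [h.add, ← pow_mul, ← pow_add, ← h3, show 4 * s + 2 * s = 6 * s by ring]; ring

lemma even_one (h2 : (2 : k) = 0) {Ψ : AddChar k ℂ} (hΨ : Ψ ∈ Xs k p) {N : ℕ} {t : k}
    (ht : t + t ^ p ^ N = 1) (z : k) (hz : z ^ p ^ N = z) : Ψ z = 1 := by
  have h1 : z = t * z + (t * z) ^ p ^ N := by
    rw [mul_pow, hz, ← add_mul, ht, one_mul]
  rw [h1, AddChar.map_add_eq_mul, Xs_pow hΨ]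
  exact char_two_sq h2 Ψ _

open Classical in
lemma even_sum (h : FrobP p k) (hp : 2 ≤ p) (hpk : (p : k) = 0) (h2 : (2 : k) = 0)
    {N : ℕ} (hN : N ≠ 0) (hk : Fintype.card k = p ^ (2 * N)) (hα : ∀ i, α i ^ p ^ N = α i)
    {t : k} (ht : t + t ^ p ^ N = 1)
    (hV : ∀ v, Egen p e α v = 0 → v ^ p ^ N = v)
    {Ψ : AddChar k ℂ} (hΨ : Ψ ∈ Xs k p) (hΨ1 : Ψ ≠ 1) :
    ∑ x : k, Ψ (x * Rgen p e α x) = (p : ℂ) ^ N *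
      ∑ v ∈ Finset.univ.filter (fun v : k => Egen p e α v = 0),
        Ψ (t * v * Rgen p e α (t * v)) := by
  have hq2 : 2 ≤ p ^ N := le_trans hp (Nat.le_self_pow hN p)
  have hqk : ((p ^ N : ℕ) : k) = 0 := by push_cast; rw [hpk, zero_pow hN]
  have hk' : Fintype.card k = (p ^ N) ^ 2 := by rw [hk, ← pow_mul, mul_comm]
  have hF : FrobP (p ^ N) k := by
    intro i
    obtain ⟨φ, hφ⟩ := h (N * i)
    exact ⟨φ, fun x => by rw [hφ, ← pow_mul]⟩
  have hΨq : Ψ ∈ Xs k (p ^ N) := by rw [mem_Xs]; intro z; exact Xs_pow hΨ N z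
  have hxx : ∀ (x : k), x + x = 0 := fun x => by rw [← two_mul, h2, zero_mul]
  have hbb : ∀ x : k, (x ^ p ^ N) ^ p ^ N = x := by
    intro x
    rw [← pow_mul, ← pow_add, ← two_mul, ← hk, FiniteField.pow_card]
  have heq : ∀ a b : k, a + b = 0 ↔ a = b := by
    intro a b
    constructor
    · intro hab
      calc a = a + (b + b) := by rw [hxx, add_zero]
        _ = (a + b) + b := by ring
        _ = b := by rw [hab, zero_add]
    · rintro rfl; exact hxx _
  set k0 : Finset k := Finset.univ.filter fun y : k => y ^ p ^ N = y with hk0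
  have hk0m : ∀ u, u ∈ k0 ↔ u ^ p ^ N = u := by intro u; simp [hk0]
  have hk0c : k0.card = p ^ N := by
    rw [hk0]; convert card_fixed (k := k) hq2 hqk (m := 2) (by norm_num) hk'
  have hR0 : ∀ u ∈ k0, Ψ (u * Rgen p e α u) = 1 := by
    intro u hu
    rw [hk0m] at hu
    refine even_one h2 hΨ ht _ ?_
    rw [mul_pow, R_frob h N hα, hu]
  -- inner sum
  have hinner : ∀ c : k, ∑ u ∈ k0, Ψ (u ^ p ^ e * c) =
      if c ^ p ^ N = c then (p : ℂ) ^ N else 0 := by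
    intro c
    split_ifs with hc
    · rw [Finset.sum_congr rfl (g := fun _ => (1 : ℂ))]
      · simp [hk0c]
      · intro u hu
        rw [hk0m] at hu
        refine even_one h2 hΨ ht _ ?_
        rw [mul_pow, hc, ← pow_mul, mul_comm (p ^ e), pow_mul, hu]
    · have hTr : Trq (p ^ N) 1 c ≠ 0 := by
        intro h0
        apply hc
        have : c + c ^ p ^ N = 0 := by
          rw [← h0]; simp [Trq, Rgen, Finset.sum_range_succ]
        exact ((heq _ _).mp this).symm
      obtain ⟨m, hm, hmΨ⟩ := char_Tr_ne hF hq2 hqk (M := 1) hk' hΨq hΨ1 c hTr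
      obtain ⟨u, hu⟩ := frob_surj h e m
      have huf : u ^ p ^ N = u := by
        obtain ⟨φ, hφ⟩ := h e
        apply φ.injective
        rw [hφ, hφ, ← pow_mul, mul_comm (p ^ N), pow_mul, hu, hm]
      refine sum_zero_of_translate k0 u ?_ (fun x => Ψ (x ^ p ^ e * c)) _ hmΨ ?_
      · intro x
        rw [hk0m, hk0m, h.add, huf]
        exact ⟨fun hx => by rw [hx], fun hx => add_right_cancel hx⟩
      · intro x _
        rw [h.add, add_mul, hu, AddChar.map_add_eq_mul, mul_comm]
  -- averaging
  have havg : (p : ℂ) ^ N * ∑ x : k, Ψ (x * Rgen p e α x) =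
      (p : ℂ) ^ N * ∑ x ∈ Finset.univ.filter (fun x : k => (Egen p e α x) ^ p ^ N = Egen p e α x),
        Ψ (x * Rgen p e α x) := by
    have h1 : (p : ℂ) ^ N * ∑ x : k, Ψ (x * Rgen p e α x) =
        ∑ u ∈ k0, ∑ x : k, Ψ ((x + u) * Rgen p e α (x + u)) := by
      have h0 : ∀ u ∈ k0, ∑ x : k, Ψ ((x + u) * Rgen p e α (x + u)) =
          ∑ x : k, Ψ (x * Rgen p e α x) := fun u _ =>
        Equiv.sum_comp (Equiv.addRight u) (fun x => Ψ (x * Rgen p e α x))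
      rw [Finset.sum_congr rfl h0, Finset.sum_const, hk0c, nsmul_eq_mul]
      push_cast
      ring
    rw [h1, Finset.sum_comm, Finset.mul_sum, Finset.sum_filter]
    refine Finset.sum_congr rfl fun x _ => ?_
    rw [Finset.sum_congr rfl (g := fun u => Ψ (x * Rgen p e α x) * Ψ (u ^ p ^ e * Egen p e α x))]
    · rw [← Finset.mul_sum, hinner]
      split_ifs
      · ring
      · ring
    · intro u hu
      rw [xR_add h hΨ, hR0 u hu, mul_one]
  have hp0 : (p : ℂ) ^ N ≠ 0 := pow_ne_zero _ (by exact_mod_cast (by omega : p ≠ 0))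
  rw [mul_left_cancel₀ hp0 havg]
  -- bijection
  have hEt : ∀ v, Egen p e α v = 0 → (Egen p e α (t * v)) ^ p ^ N = Egen p e α (t * v) := by
    intro v hv
    rw [E_frob h N hα, mul_pow, hV v hv]
    have : Egen p e α (t * v) + Egen p e α (t ^ p ^ N * v) = 0 := by
      rw [← E_add h, ← add_mul, ht, one_mul, hv]
    exact ((heq _ _).mp this).symm
  have hb : ∑ x ∈ Finset.univ.filter (fun x : k => (Egen p e α x) ^ p ^ N = Egen p e α x),
        Ψ (x * Rgen p e α x) =
      ∑ w ∈ (Finset.univ.filter (fun v : k => Egen p e α v = 0)) ×ˢ k0,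
        Ψ (t * w.1 * Rgen p e α (t * w.1)) := by
    symm
    have key : ∀ v, Egen p e α v = 0 → ∀ u, u ^ p ^ N = u →
        (t * v + u) + (t * v + u) ^ p ^ N = v := by
      intro v hv u hu
      rw [h.add, mul_pow, hV v hv, hu]
      calc t * v + u + (t ^ p ^ N * v + u) = (t + t ^ p ^ N) * v + (u + u) := by ring
        _ = v := by rw [ht, hxx]; ring
    refine Finset.sum_bij' (fun w _ => t * w.1 + w.2)
      (fun x _ => (x + x ^ p ^ N, x + t * (x + x ^ p ^ N))) ?_ ?_ ?_ ?_ ?_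
    · rintro ⟨v, u⟩ hw
      rw [Finset.mem_product, Finset.mem_filter, hk0m] at hw
      obtain ⟨⟨-, hv⟩, hu⟩ := hw
      simp only at hv hu
      simp only [Finset.mem_filter, Finset.mem_univ, true_and]
      rw [E_add h, h.add, hEt v hv, E_frob h N hα u, hu]
    · intro x hx
      simp only [Finset.mem_filter, Finset.mem_univ, true_and] at hx
      rw [Finset.mem_product, Finset.mem_filter, hk0m]
      simp only [Finset.mem_univ, true_and]
      refine ⟨?_, ?_⟩
      · rw [E_add h, ← E_frob h N hα, hx, hxx]
      · rw [h.add, mul_pow, h.add, hbb]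
        have : t ^ p ^ N = 1 + t := by
          rw [← ht]
          calc t ^ p ^ N = t ^ p ^ N + (t + t) := by rw [hxx, add_zero]
            _ = _ := by ring
        rw [this]
        linear_combination (x ^ p ^ N) * h2
    · rintro ⟨v, u⟩ hw
      rw [Finset.mem_product, Finset.mem_filter, hk0m] at hw
      obtain ⟨⟨-, hv⟩, hu⟩ := hw
      simp only at hv hu
      simp only [key v hv u hu, Prod.mk.injEq, true_and]
      linear_combination (t * v) * h2
    · intro x hx
      simp only
      linear_combination (t * (x + x ^ p ^ N)) * h2
    · rintro ⟨v, u⟩ hw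
      rw [Finset.mem_product, Finset.mem_filter] at hw
      obtain ⟨⟨-, hv⟩, hu⟩ := hw
      simp only at hv hu
      have hu' := (hk0m u).mp hu
      simp only
      rw [xR_add h hΨ, hR0 u hu, mul_one]
      rw [even_one h2 hΨ ht (u ^ p ^ e * Egen p e α (t * v)), mul_one]
      rw [mul_pow, hEt v hv, ← pow_mul, mul_comm (p ^ e), pow_mul, hu']
  rw [hb, Finset.sum_product, Finset.mul_sum]
  refine Finset.sum_congr rfl fun v _ => ?_
  simp [hk0c]

lemma even_f (h : FrobP p k) (h2 : (2 : k) = 0) {s : ℕ}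
    (hα : ∀ i, α i ^ p ^ (2 * s) = α i)
    {t t1 : k} (ht : t + t ^ p ^ (4 * s) = 1) (ht1 : t1 ^ p ^ (4 * s) = t1)
    (ht1' : t1 + t1 ^ p ^ (2 * s) = 1) (hk : Fintype.card k = p ^ (8 * s))
    (v : k) (hv : Egen p e α v = 0) (hvf : v ^ p ^ (2 * s) = v)
    (y : k) (hy : y ^ p - y = t * v * Rgen p e α (t * v)) : fgen p e α v v = 0 := by
  have hxx : ∀ (x : k), x + x = 0 := fun x => by rw [← two_mul, h2, zero_mul]
  have hvf4 : v ^ p ^ (4 * s) = v := by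
    rw [show 4 * s = 2 * s + 2 * s by ring, pow_add, pow_mul, hvf, hvf]
  have hα4 : ∀ i, α i ^ p ^ (4 * s) = α i := by
    intro i
    rw [show 4 * s = 2 * s + 2 * s by ring, pow_add, pow_mul, hα, hα]
  have htb : t ^ p ^ (4 * s) = t + 1 := by linear_combination ht - t * h2
  set r := v * Rgen p e α v with hr
  have hrf : r ^ p ^ (2 * s) = r := by rw [hr, mul_pow, R_frob h _ hα, hvf]
  have hrf4 : r ^ p ^ (4 * s) = r := by
    rw [show 4 * s = 2 * s + 2 * s by ring, pow_add, pow_mul, hrf, hrf]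
  set b := ∑ i ∈ Finset.range (2 * s), (t1 * r) ^ p ^ i with hb
  have hbp : b ^ p - b = r := by
    rw [hb, telescope h, mul_pow, hrf]
    linear_combination r * ht1' - r * t1 * h2
  have hbb : b ^ p ^ (4 * s) = b := by
    rw [hb, h.sum (4 * s)]
    refine Finset.sum_congr rfl fun i _ => ?_
    rw [← pow_mul, mul_comm (p ^ i), pow_mul, mul_pow, ht1, hrf4]
  have hybar : (y ^ p ^ (4 * s)) ^ p - y ^ p ^ (4 * s) =
      (t + 1) * v * Rgen p e α ((t + 1) * v) := by
    have h1 : (y ^ p - y) ^ p ^ (4 * s) = (t + 1) * v * Rgen p e α ((t + 1) * v) := by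
      rw [hy, mul_pow, R_frob h _ hα4, mul_pow, htb, hvf4]
    rw [← h1, h.sub, ← pow_mul, ← pow_mul, mul_comm]
  have hRt : Rgen p e α ((t + 1) * v) = Rgen p e α (t * v) + Rgen p e α v := by
    rw [add_mul, one_mul, R_add h]
  have hft := f_wp (e := e) (a := α) h (t * v) v
  rw [hv, mul_zero, sub_zero] at hft
  set w := y + y ^ p ^ (4 * s) + fgen p e α (t * v) v + b with hw
  have hwp : w ^ p = w := by
    rw [← sub_eq_zero, hw, h.add1, h.add1, h.add1]
    rw [hRt] at hybar
    have hft' := hft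
    linear_combination hy + hybar + hft + hbp +
      (t * v * Rgen p e α (t * v) + t * v * Rgen p e α v + v * Rgen p e α (t * v) + r) * h2
  have hwb : w ^ p ^ (4 * s) = w := fixed_pow hwp _
  have hbb8 : (y ^ p ^ (4 * s)) ^ p ^ (4 * s) = y := by
    rw [← pow_mul, ← pow_add, ← two_mul, show 2 * (4 * s) = 8 * s by ring, ← hk,
      FiniteField.pow_card]
  have hfb : fgen p e α (t * v) v ^ p ^ (4 * s) = fgen p e α (t * v) v + fgen p e α v v := by
    rw [f_frob h _ hα4, mul_pow, htb, hvf4, add_mul, one_mul, f_add_left h]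
  have h3 : w ^ p ^ (4 * s) = w + fgen p e α v v := by
    rw [hw, h.add, h.add, h.add, hbb8, hfb, hbb]; ring
  rw [hwb] at h3
  exact (left_eq_add.mp h3)

open Classical in
lemma even_diag (h : FrobP p k) (h2 : (2 : k) = 0)
    (hlt : (Finset.univ.filter fun v : k => Egen p e α v = 0).card < Fintype.card k)
    (hgt : 1 < (Finset.univ.filter fun v : k => Egen p e α v = 0).card) :
    ∃ x : k, fgen p e α x x ≠ 0 := by
  by_contra hcon
  push Not at hcon
  have h1 : ∀ x y, fgen p e α x y + fgen p e α y x = 0 := by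
    intro x y
    have := hcon (x + y)
    rw [f_add_left h, f_add_right h, f_add_right h, hcon, hcon] at this
    linear_combination this
  have h3 : ∀ x y, x ^ p ^ e * Egen p e α y + y ^ p ^ e * Egen p e α x = 0 := by
    intro x y
    have ha := f_wp (e := e) (a := α) h x y
    have hb := f_wp (e := e) (a := α) h y x
    have hc := h1 x y
    have hd : fgen p e α y x = - fgen p e α x y := by linear_combination hc
    rw [hd, h.neg1] at hb
    linear_combination ha + hb + (x * Rgen p e α y + y * Rgen p e α x) * h2
  obtain ⟨y, hy, hy0⟩ := Finset.exists_mem_ne hgt 0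
  have hyE : Egen p e α y = 0 := (Finset.mem_filter.mp hy).2
  obtain ⟨x, hx⟩ : ∃ x, Egen p e α x ≠ 0 := by
    by_contra hcon
    push Not at hcon
    rw [Finset.filter_true_of_mem (fun x _ => hcon x), Finset.card_univ] at hlt
    exact lt_irrefl _ hlt
  have := h3 x y
  rw [hyE, mul_zero, zero_add] at this
  exact (mul_ne_zero (pow_ne_zero _ hy0) hx) this

end EvenCase


section EvenMain

variable {k : Type*} [Field k] [Fintype k] {p e : ℕ} {α : ℕ → k}

lemma even_sqrt (h2 : (2 : k) = 0) (c : k) (hc : c ^ p = c) :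
    ∃ d : k, d * d = c ∧ d ^ p = d := by
  have hr : ringChar k = 2 := CharP.ringChar_of_prime_eq_zero Nat.prime_two (by exact_mod_cast h2)
  obtain ⟨d, hd⟩ := FiniteField.isSquare_of_char_two hr c
  refine ⟨d, hd.symm, ?_⟩
  have h1 : (d ^ p) * (d ^ p) = d * d := by rw [← mul_pow, ← hd, hc]
  have h3 : (d ^ p - d) * (d ^ p - d) = 0 := by
    linear_combination h1 + (d * d - d ^ p * d) * h2
  exact sub_eq_zero.mp (mul_self_eq_zero.mp h3)

open Classical in
lemma even_count (h : FrobP p k) (hp : 2 ≤ p) (hpk : (p : k) = 0) (h2 : (2 : k) = 0) {s : ℕ}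
    (hs : s ≠ 0) (hk : Fintype.card k = p ^ (8 * s)) (hα : ∀ i, α i ^ p ^ (2 * s) = α i)
    (he : 1 ≤ e)
    {t t1 : k} (ht : t + t ^ p ^ (4 * s) = 1) (ht1 : t1 ^ p ^ (4 * s) = t1)
    (ht1' : t1 + t1 ^ p ^ (2 * s) = 1)
    (hVc : (Finset.univ.filter fun v : k => Egen p e α v = 0).card = p ^ (2 * e))
    (hlt : (Finset.univ.filter fun v : k => Egen p e α v = 0).card < Fintype.card k)
    (hV : ∀ v, Egen p e α v = 0 → v ^ p ^ (2 * s) = v)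
    (hsum : ∀ Ψ ∈ Xs k p, Ψ ≠ 1 → ∑ v ∈ Finset.univ.filter (fun v : k => Egen p e α v = 0),
        Ψ (t * v * Rgen p e α (t * v)) = (p : ℂ) ^ e) : False := by
  have hm : 8 * s ≠ 0 := by omega
  have hcp := count_points h hp hpk hm hk
    (fun v : {v : k // Egen p e α v = 0} => t * v.1 * Rgen p e α (t * v.1)) ((p : ℂ) ^ e) (by
      intro Ψ hΨ hΨ1
      rw [← hsum Ψ hΨ hΨ1]
      rw [← Finset.sum_subtype (p := fun v : k => Egen p e α v = 0)
        (f := fun v => Ψ (t * v * Rgen p e α (t * v)))]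
      intro x; simp)
  rw [Fintype.card_subtype, hVc] at hcp
  set Z := Finset.univ.filter (fun z : {v : k // Egen p e α v = 0} × k =>
    z.2 ^ p - z.2 = t * z.1.1 * Rgen p e α (t * z.1.1)) with hZ
  have hN1 : Z.card = p ^ (2 * e) + (p - 1) * p ^ e := by
    have : ((Z.card : ℕ) : ℂ) = ((p ^ (2 * e) + (p - 1) * p ^ e : ℕ) : ℂ) := by
      rw [hcp]
      push_cast [Nat.cast_sub (show 1 ≤ p by omega)]
      ring
    exact_mod_cast this
  have hle : Z.card ≤ p * (Z.image (fun z => z.1.1)).card := by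
    refine Finset.card_le_mul_card_image Z p ?_
    intro a ha
    obtain ⟨z0, hz0, rfl⟩ := Finset.mem_image.mp ha
    have hz0' : z0.2 ^ p - z0.2 = t * z0.1.1 * Rgen p e α (t * z0.1.1) := by
      simpa [hZ] using hz0
    refine le_of_le_of_eq ?_ (card_fixed (k := k) hp hpk hm hk)
    refine Finset.card_le_card_of_injOn (fun z => z.2 - z0.2) ?_ ?_
    · intro z hz
      obtain ⟨hz1, hz2⟩ := Finset.mem_filter.mp hz
      have hz1' : z.2 ^ p - z.2 = t * z.1.1 * Rgen p e α (t * z.1.1) := by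
        simpa [hZ] using hz1
      simp only [Finset.coe_filter, Finset.mem_univ, true_and, Set.mem_ofPred_eq]
      rw [hz2] at hz1'
      rw [h.sub1]
      linear_combination hz1' - hz0'
    · intro z hz z' hz' hzz
      have hz2 := (Finset.mem_filter.mp hz).2
      have hz2' := (Finset.mem_filter.mp hz').2
      refine Prod.ext (Subtype.ext (hz2.trans hz2'.symm)) ?_
      exact sub_left_injective hzz
  have himg : (Z.image (fun z => z.1.1)).card ≤
      (Finset.univ.filter fun x : k => fgen p e α x x = 0).card := by
    apply Finset.card_le_card
    intro v hv
    obtain ⟨z, hz, rfl⟩ := Finset.mem_image.mp hv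
    have hz' : z.2 ^ p - z.2 = t * z.1.1 * Rgen p e α (t * z.1.1) := by
      simpa [hZ] using hz
    simp only [Finset.mem_filter, Finset.mem_univ, true_and]
    exact even_f h h2 hα ht ht1 ht1' hk z.1.1 z.1.2 (hV _ z.1.2) z.2 hz'
  have hpe : 1 < p ^ (2 * e) := Nat.one_lt_pow (by omega) (by omega)
  have hfd := card_fdiag (k := k) (α := α) hp he (even_diag h h2 hlt (by rw [hVc]; exact hpe))
  obtain ⟨e', rfl⟩ : ∃ e', e = e' + 1 := ⟨e - 1, by omega⟩
  set N0 := (Finset.univ.filter fun x : k => fgen p (e' + 1) α x x = 0).card with hN0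
  have h5 : p * N0 + p ≤ p ^ (2 * (e' + 1)) + p ^ (e' + 1) := by
    have := Nat.mul_le_mul_left p hfd
    have e1 : 2 * (e' + 1) - 1 = 2 * e' + 1 := by omega
    have e2 : e' + 1 - 1 = e' := by omega
    rw [e1, e2] at this
    calc p * N0 + p = p * (N0 + 1) := by ring
      _ ≤ _ := by convert this using 1
      _ = _ := by ring
  have h6 : Z.card ≤ p * N0 := hle.trans (Nat.mul_le_mul_left p himg)
  have h7 : 1 * p ^ (e' + 1) ≤ (p - 1) * p ^ (e' + 1) := Nat.mul_le_mul_right _ (by omega)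
  omega

open Classical in
lemma even_main (h : FrobP p k) (hp : 2 ≤ p) (hpk : (p : k) = 0) (h2 : (2 : k) = 0) {s : ℕ}
    (hs : s ≠ 0) (hk : Fintype.card k = p ^ (8 * s)) (hα : ∀ i, α i ^ p ^ s = α i)
    (he : 1 ≤ e)
    (hVc : (Finset.univ.filter fun v : k => Egen p e α v = 0).card = p ^ (2 * e))
    (hlt : p ^ (2 * e) < Fintype.card k)
    (hV : ∀ v, Egen p e α v = 0 → v ^ p ^ (2 * s) = v)
    (Ψ : AddChar k ℂ) (hΨ : Ψ ∈ Xs k p) (hΨ1 : Ψ ≠ 1) :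
    ∑ x : k, Ψ (x * Rgen p e α x) = -((p : ℂ) ^ e * (p : ℂ) ^ (4 * s)) := by
  have hm : 8 * s ≠ 0 := by omega
  obtain ⟨t, t1, ht, ht1, ht1'⟩ := even_t h hp h2 hs hk
  have hα2 : ∀ i, α i ^ p ^ (2 * s) = α i := by
    intro i
    rw [two_mul, pow_add, pow_mul, hα, hα]
  have hα4 : ∀ i, α i ^ p ^ (4 * s) = α i := by
    intro i
    rw [show 4 * s = 2 * s + 2 * s by ring, pow_add, pow_mul, hα2, hα2]
  have hV4 : ∀ v, Egen p e α v = 0 → v ^ p ^ (4 * s) = v := by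
    intro v hv
    rw [show 4 * s = 2 * s + 2 * s by ring, pow_add, pow_mul, hV v hv, hV v hv]
  have hsq := sum_sq (e := e) (α := α) h h2 hΨ hΨ1 (by
    intro v hv
    refine even_one h2 hΨ ht _ ?_
    rw [mul_pow, R_frob h _ hα4, hV4 v hv])
  rw [hVc, hk] at hsq
  have hsq' : (∑ x : k, Ψ (x * Rgen p e α x)) ^ 2 = ((p : ℂ) ^ e * (p : ℂ) ^ (4 * s)) ^ 2 := by
    rw [hsq]; push_cast; ring
  rcases sq_eq_sq_iff_eq_or_eq_neg.mp hsq' with hS | hS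
  swap
  · exact hS
  exfalso
  refine even_count (e := e) (α := α) h hp hpk h2 hs hk hα2 he ht ht1 ht1' hVc (by rw [hVc]; exact hlt) hV ?_
  intro Ψ' hΨ' hΨ1'
  obtain ⟨c, hc, hcΨ⟩ := Xs_shift h hp hpk hm hk hΨ hΨ1 Ψ' hΨ'
  obtain ⟨d, hd, hdp⟩ := even_sqrt h2 c hc
  have hc0 : c ≠ 0 := by
    rintro rfl
    apply hΨ1'
    ext z
    simp [hcΨ]
  have hd0 : d ≠ 0 := by
    rintro rfl
    exact hc0 (by rw [← hd, mul_zero])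
  have hS' : ∑ x : k, Ψ' (x * Rgen p e α x) = (p : ℂ) ^ e * (p : ℂ) ^ (4 * s) := by
    rw [← hS, ← Equiv.sum_comp (Equiv.mulLeft₀ d hd0) (fun x => Ψ (x * Rgen p e α x))]
    refine Finset.sum_congr rfl fun x _ => ?_
    rw [hcΨ]
    simp only [Equiv.mulLeft₀_apply]
    rw [R_smul hdp, ← hd]
    congr 1
    ring
  have hes := even_sum (e := e) (α := α) h hp hpk h2 (N := 4 * s) (by omega)
    (by rw [hk]; congr 1; ring) hα4 ht hV4 hΨ' hΨ1'
  rw [hS', mul_comm] at hes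
  have hp0 : (p : ℂ) ^ (4 * s) ≠ 0 := pow_ne_zero _ (by exact_mod_cast (by omega : p ≠ 0))
  exact (mul_left_cancel₀ hp0 hes).symm

end EvenMain


lemma char_eq_two {L : Type*} [Field L] {p₀ : ℕ} [CharP L p₀] (hp₀ : p₀.Prime) (h : (2 : L) = 0) :
    p₀ = 2 := by
  have h' : ((2 : ℕ) : L) = 0 := by exact_mod_cast h
  rw [CharP.cast_eq_zero_iff L p₀] at h'
  exact (Nat.prime_dvd_prime_iff_eq hp₀ Nat.prime_two).mp h'


/-- if some maximal abelian subgroup `A_R` of `H_R` is contained in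
`F_q × F_q`, then `#{(x,y) ∈ F_{q^{4p₀}}² : y^p − y = x·R(x)} = q^{4p₀} − (p−1)p^e q^{2p₀}`,
i.e. the Van der Geer–Van der Vlugt curve is `F_{q^{4p₀}}`-minimal (hence supersingular). -/
theorem statement17 {F K F' : Type*} [Field F] [Fintype F]
    [Field K] [IsAlgClosed K] [Algebra F K]
    [Field F'] [Fintype F'] [DecidableEq F'] [Algebra F F']
    (p₀ n p s q e f : ℕ) (hp₀ : p₀.Prime) [CharP F p₀] (hn : 0 < n) (hpn : p = p₀ ^ n)
    (hs : 0 < s) (hq : q = p ^ s) (hcard : Fintype.card F = q) (hf : q = p₀ ^ f)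
    (a : ℕ → F) (hae : a e ≠ 0) (hne : (p₀, e) ≠ (2, 0))
    -- `A_R = S` is a maximal abelian subgroup of `H_R` contained in `F_q × F_q`
    (S : Set (K × K))
    (hSsub : S ⊆ Hset p e (fun i => algebraMap F K (a i)))
    (hS0 : ((0 : K), (0 : K)) ∈ S)
    (hSmul : ∀ h ∈ S, ∀ h' ∈ S, Hmul p e (fun i => algebraMap F K (a i)) h h' ∈ S)
    (hSinv : ∀ h ∈ S, ∃ h' ∈ S, Hmul p e (fun i => algebraMap F K (a i)) h h' = (0, 0))
    (hScomm : ∀ h ∈ S, ∀ h' ∈ S, Hmul p e (fun i => algebraMap F K (a i)) h h' =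
      Hmul p e (fun i => algebraMap F K (a i)) h' h)
    (hSmax : ∀ T : Set (K × K), T ⊆ Hset p e (fun i => algebraMap F K (a i)) →
      ((0 : K), (0 : K)) ∈ T →
      (∀ h ∈ T, ∀ h' ∈ T, Hmul p e (fun i => algebraMap F K (a i)) h h' ∈ T) →
      (∀ h ∈ T, ∃ h' ∈ T, Hmul p e (fun i => algebraMap F K (a i)) h h' = (0, 0)) →
      (∀ h ∈ T, ∀ h' ∈ T, Hmul p e (fun i => algebraMap F K (a i)) h h' =
        Hmul p e (fun i => algebraMap F K (a i)) h' h) →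
      S ⊆ T → T = S)
    (hSF : ∀ h ∈ S, (∃ x : F, algebraMap F K x = h.1) ∧ (∃ y : F, algebraMap F K y = h.2))
    -- `F' = F_{q^{4p₀}}`
    (hcard' : Fintype.card F' = q ^ (4 * p₀)) :
    ((Finset.univ.filter fun z : F' × F' =>
        z.2 ^ p - z.2 = z.1 * Rgen p e (fun i => algebraMap F F' (a i)) z.1).card : ℤ) =
      (q : ℤ) ^ (4 * p₀) - ((p : ℤ) - 1) * (p : ℤ) ^ e * (q : ℤ) ^ (2 * p₀) := by
  classical
  set α : ℕ → K := fun i => algebraMap F K (a i) with hα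
  have hinj : Function.Injective (algebraMap F K) := (algebraMap F K).injective
  have hcK : CharP K p₀ := charP_of_injective_algebraMap hinj p₀
  have hcF' : CharP F' p₀ := charP_of_injective_algebraMap (algebraMap F F').injective p₀
  have hFF : FrobP p F := frobP_of_charP hp₀ hpn
  have hFK : FrobP p K := frobP_of_charP hp₀ hpn
  have hFF' : FrobP p F' := frobP_of_charP hp₀ hpn
  have hp2 : 2 ≤ p := by
    rw [hpn]; exact le_trans hp₀.two_le (Nat.le_self_pow (by omega) p₀)
  have hpF : (p : F) = 0 := by rw [hpn]; push_cast; rw [CharP.cast_eq_zero, zero_pow (by omega)]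
  have hpK : (p : K) = 0 := by rw [hpn]; push_cast; rw [CharP.cast_eq_zero, zero_pow (by omega)]
  have hpF' : (p : F') = 0 := by rw [hpn]; push_cast; rw [CharP.cast_eq_zero, zero_pow (by omega)]
  have hαe : α e ≠ 0 := by
    rw [hα]; simpa using hae
  have hq2 : 2 ≤ q := by rw [hq]; exact le_trans hp2 (Nat.le_self_pow (by omega) p)
  have hneK : e = 0 → (2 : K) ≠ 0 := fun he h2 => hne (by rw [char_eq_two hp₀ h2, he])
  -- the abelian group
  set Ab : Set K := Prod.fst '' S with hAb
  have hmem : ∀ v, Egen p e α v = 0 → ((∀ a ∈ Ab, fgen p e α v a = fgen p e α a v) ↔ v ∈ Ab) :=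
    fun v hv => max_abelian_mem hFK hp2 S hSsub hS0 hSmul hSinv hScomm hSmax v hv
  have hsub : ∀ x ∈ Ab, Egen p e α x = 0 := by
    rintro x ⟨w, hw, rfl⟩
    exact (hSsub hw).1
  have hAbcard : Ab.ncard = p ^ e := lagr_card hFK hp2 hpK hαe hneK Ab hsub hmem
  have hAbF : ∀ x ∈ Ab, ∃ y : F, algebraMap F K y = x := by
    rintro x ⟨w, hw, rfl⟩
    exact (hSF w hw).1
  have hAbsym : ∀ x ∈ Ab, ∀ y ∈ Ab, fgen p e α x y = fgen p e α y x :=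
    fun x hx y hy => (hmem x (hsub x hx)).mpr hx y hy
  have hqF : ∀ x : F, x ^ p ^ s = x := by
    intro x; rw [← hq, ← hcard, FiniteField.pow_card]
  set A : Finset F := Finset.univ.filter fun x => algebraMap F K x ∈ Ab with hA
  have hAm : ∀ x, x ∈ A ↔ algebraMap F K x ∈ Ab := by intro x; simp [hA]
  have hAc : A.card = p ^ e := by
    rw [← hAbcard, ← Set.ncard_coe_finset, ← Set.ncard_image_of_injective _ hinj]
    congr 1
    ext x
    constructor
    · rintro ⟨y, hy, rfl⟩
      exact (hAm y).mp (by exact_mod_cast hy)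
    · intro hx
      obtain ⟨y, rfl⟩ := hAbF x hx
      exact ⟨y, by exact_mod_cast (hAm y).mpr hx, rfl⟩
  have hA0 : (0 : F) ∈ A := by
    rw [hAm, map_zero]; exact ⟨_, hS0, rfl⟩
  have hAadd : ∀ x ∈ A, ∀ y ∈ A, x + y ∈ A := by
    intro x hx y hy
    rw [hAm] at hx hy ⊢
    rw [map_add]
    refine (hmem _ (by rw [E_add hFK, hsub _ hx, hsub _ hy, add_zero])).mp ?_
    intro b hb
    rw [f_add_left hFK, f_add_right hFK, hAbsym _ hx _ hb, hAbsym _ hy _ hb]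
  have hAsmul : ∀ c : F, c ^ p = c → ∀ x ∈ A, c * x ∈ A := by
    intro c hc x hx
    rw [hAm] at hx ⊢
    have hc' : (algebraMap F K c) ^ p = algebraMap F K c := by rw [← map_pow, hc]
    rw [map_mul]
    refine (hmem _ (by rw [E_smul hc', hsub _ hx, mul_zero])).mp ?_
    intro b hb
    rw [f_smul_left hc', f_smul_right hc', hAbsym _ hx _ hb]
  have hAE : ∀ x ∈ A, Egen p e a x = 0 := by
    intro x hx
    rw [hAm] at hx
    apply hinj
    rw [E_map, map_zero]; exact hsub _ hx
  have hAsym : ∀ x ∈ A, ∀ y ∈ A, fgen p e a x y = fgen p e a y x := by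
    intro x hx y hy
    rw [hAm] at hx hy
    apply hinj
    rw [f_map, f_map]; exact hAbsym _ hx _ hy
  have hpeq : p ^ e ≤ q := by
    rw [← hAc, ← hcard]; exact Finset.card_le_univ A
  have hpq : p ≤ q := by rw [hq]; exact Nat.le_self_pow (by omega) p
  have h4 : 4 ≤ 4 * p₀ := by have := hp₀.two_le; omega
  have hq4 : q ^ 4 ≤ Fintype.card F' := by
    rw [hcard']; exact Nat.pow_le_pow_right (by omega) h4
  have hkc : p ^ (e + 1) ≤ Fintype.card F' := by
    calc p ^ (e + 1) = p ^ e * p := pow_succ _ _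
      _ ≤ q * q := Nat.mul_le_mul hpeq hpq
      _ = q ^ 2 := by ring
      _ ≤ q ^ 4 := Nat.pow_le_pow_right (by omega) (by norm_num)
      _ ≤ _ := hq4
  have hlt : p ^ (2 * e) < Fintype.card F' := by
    calc p ^ (2 * e) = p ^ e * p ^ e := by ring
      _ ≤ q * q := Nat.mul_le_mul hpeq hpeq
      _ = q ^ 2 := by ring
      _ < q ^ 4 := Nat.pow_lt_pow_right (by omega) (by norm_num)
      _ ≤ _ := hq4
  have hαF' : ∀ i, (algebraMap F F' (a i)) ^ p ^ s = algebraMap F F' (a i) := by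
    intro i; rw [← map_pow, hqF]
  have hkp : Fintype.card F' = p ^ (s * (4 * p₀)) := by rw [hcard', hq, ← pow_mul]
  have hm0 : s * (4 * p₀) ≠ 0 := by
    have := hp₀.pos; positivity
  have hmain : ∀ Ψ ∈ Xs F' p, Ψ ≠ 1 →
      ∑ x : F', Ψ (x * Rgen p e (fun i => algebraMap F F' (a i)) x) =
        -((p : ℂ) ^ e * (q : ℂ) ^ (2 * p₀)) := by
    intro Ψ hΨ hΨ1
    by_cases hodd : p₀ = 2
    · -- characteristic two
      subst hodd
      have he : 1 ≤ e := by
        rcases Nat.eq_zero_or_pos e with h | h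
        · exact absurd (by rw [h]) hne
        · exact h
      have h2 : (2 : F') = 0 := by exact_mod_cast CharP.cast_eq_zero F' 2
      have hVfix : ∀ v : K, Egen p e α v = 0 → v ^ p ^ (s * 2) = v := by
        intro v hv
        refine V_fixed hFK 2 (by exact_mod_cast CharP.cast_eq_zero K 2) Ab hsub hmem s ?_ ?_ v hv
        · intro i; rw [hα]; simp only; rw [← map_pow, hqF]
        · intro x hx
          obtain ⟨y, rfl⟩ := hAbF x hx
          rw [← map_pow, hqF]
      let φ : F' →ₐ[F] K := IsAlgClosed.lift
      have hφi : Function.Injective φ := φ.toRingHom.injective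
      have hφE : ∀ x : F', φ (Egen p e (fun i => algebraMap F F' (a i)) x) = Egen p e α (φ x) := by
        intro x
        have := E_map (p := p) (e := e) (a := fun i => algebraMap F F' (a i)) φ.toRingHom x
        simpa [hα] using this
      have hVF : ∀ v : F', Egen p e (fun i => algebraMap F F' (a i)) v = 0 →
          v ^ p ^ (2 * s) = v := by
        intro v hv
        apply hφi
        rw [map_pow, mul_comm 2 s]
        apply hVfix
        rw [← hφE, hv, map_zero]
      have hrange : ∀ v : K, v ^ Fintype.card F' = v → ∃ x : F', φ x = v := by
        intro v hv
        have h1 : (Set.range φ) = {y : K | y ^ Fintype.card F' = y} := by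
          refine Set.eq_of_subset_of_ncard_le ?_ ?_ ?_
          · rintro _ ⟨x, rfl⟩
            simp only [Set.mem_ofPred_eq]
            rw [← map_pow, FiniteField.pow_card]
          · rw [← Set.image_univ, Set.ncard_image_of_injective _ hφi, Set.ncard_univ,
              Nat.card_eq_fintype_card]
            have hc : (({y : K | y ^ Fintype.card F' = y} : Set K)) ⊆
                ((X ^ Fintype.card F' - X : K[X]).roots.toFinset : Set K) := by
              intro y hy
              simp only [Finset.mem_coe, Multiset.mem_toFinset]
              rw [mem_roots (FiniteField.X_pow_card_sub_X_ne_zero K Fintype.one_lt_card)]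
              simpa [sub_eq_zero] using hy
            refine (Set.ncard_le_ncard hc (Finset.finite_toSet _)).trans ?_
            rw [Set.ncard_coe_finset]
            refine (Multiset.toFinset_card_le _).trans ((card_roots' _).trans ?_)
            rw [FiniteField.X_pow_card_sub_X_natDegree_eq K Fintype.one_lt_card]
          · have hc : (({y : K | y ^ Fintype.card F' = y} : Set K)) ⊆
                ((X ^ Fintype.card F' - X : K[X]).roots.toFinset : Set K) := by
              intro y hy
              simp only [Finset.mem_coe, Multiset.mem_toFinset]
              rw [mem_roots (FiniteField.X_pow_card_sub_X_ne_zero K Fintype.one_lt_card)]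
              simpa [sub_eq_zero] using hy
            exact (Finset.finite_toSet _).subset hc
        have : v ∈ Set.range φ := by rw [h1]; exact hv
        exact this
      have hVc : (Finset.univ.filter fun v : F' =>
          Egen p e (fun i => algebraMap F F' (a i)) v = 0).card = p ^ (2 * e) := by
        rw [← ncard_V hp2 hpK hαe hneK, ← Set.ncard_coe_finset,
          ← Set.ncard_image_of_injective _ hφi]
        congr 1
        ext v
        constructor
        · rintro ⟨x, hx, rfl⟩
          have hx' : Egen p e (fun i => algebraMap F F' (a i)) x = 0 := by simpa using hx
          simp only [Set.mem_ofPred_eq]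
          rw [← hφE, hx', map_zero]
        · intro hv
          have hv' : Egen p e α v = 0 := hv
          have hf2 := hVfix v hv'
          obtain ⟨x, rfl⟩ := hrange v (by
            rw [hkp, show s * (4 * 2) = s * 2 + (s * 2 + (s * 2 + s * 2)) by ring]
            rw [pow_add p, pow_mul, hf2, pow_add p, pow_mul, hf2, pow_add p, pow_mul, hf2, hf2])
          refine ⟨x, ?_, rfl⟩
          have : Egen p e (fun i => algebraMap F F' (a i)) x = 0 := by
            apply hφi; rw [hφE, hv', map_zero]
          simpa using this
      have := even_main (k := F') (e := e) (α := fun i => algebraMap F F' (a i)) hFF' hp2 hpF' h2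
        (s := s) (by omega) (by rw [hkp]; congr 1; ring) hαF' he (by convert hVc) hlt hVF Ψ hΨ hΨ1
      rw [this, hq]
      push_cast
      ring
    · have h2 : (2 : F') ≠ 0 := fun h => hodd (char_eq_two hp₀ h)
      have hp₀odd : Odd p₀ := hp₀.odd_of_ne_two hodd
      have hqodd : Odd q := by rw [hf]; exact hp₀odd.pow
      have hM : 4 * p₀ - 1 + 1 = 4 * p₀ := by omega
      refine odd_main (algebraMap F F') (M := 4 * p₀ - 1) (s := s) hFF hFF' hp2 hpF hpF' (by omega)
        hq hcard (by rw [hM, hcard']) (by omega) ?_ ?_ h2 hkc a A hA0 hAadd hAsmul hAc hAE hAsym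
        ?_ Ψ hΨ hΨ1
      · rw [pow_mul]
        have h1 : q ^ 2 % 4 = 1 := by
          obtain ⟨m, rfl⟩ := hqodd
          have : (2 * m + 1) ^ 2 = 4 * (m * m + m) + 1 := by ring
          omega
        rw [Nat.pow_mod, h1]; simp
      · rw [hM]; push_cast; rw [CharP.cast_eq_zero, mul_zero]
      · by_contra hcon
        push Not at hcon
        have := roots_E_le (K := F') (p := p) (e := e) (α := fun i => algebraMap F F' (a i)) hp2
          (by simpa using hae) (fun _ => h2)
        simp only [hcon, Finset.filter_true, Finset.card_univ] at this
        omega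
  have hcount := count_points (k := F') hFF' hp2 hpF' hm0 hkp
    (fun x : F' => x * Rgen p e (fun i => algebraMap F F' (a i)) x) _ hmain
  rw [hcard'] at hcount
  have hfin : (((Finset.univ.filter fun z : F' × F' =>
        z.2 ^ p - z.2 = z.1 * Rgen p e (fun i => algebraMap F F' (a i)) z.1).card : ℤ) : ℂ) =
      ((q : ℤ) ^ (4 * p₀) - ((p : ℤ) - 1) * (p : ℤ) ^ e * (q : ℤ) ^ (2 * p₀) : ℤ) := by
    push_cast
    push_cast at hcount
    refine Eq.trans ?_ (hcount.trans (by ring))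
    congr!
  exact_mod_cast hfin
end
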